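/- arXiv:2502.00084 — 2 statements merged into one kernel-verified Lean document; each statement's English description precedes it below -/
import Mathlib

section
/- Suppose μ and ν are probability measures on ℝ^d satisfying assumption (A1) with constants α, β > 0, and let φ_0 be a Brenier potential from μ to ν. Then the Brenier map ∇φ_0 is globally Lipschitz with Lipschitz constant at most √(α/β); equivalently, wherever φ_0 is twice differentiable, 0 ≼ ∇²φ_0(x) ≼ √(α/β) I_d. -/
open MeasureTheory Real
open scoped RealInnerProductSpace

/-- The entropic potential associated to a dual function `f`: `φ = ‖·‖²/2 - f`. -/
noncomputable def entPot {d : ℕ} (f : EuclideanSpace ℝ (Fin d) → ℝ) :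
    EuclideanSpace ℝ (Fin d) → ℝ :=
  fun x => ‖x‖ ^ 2 / 2 - f x

/-- `(f, g)` is a Schrödinger pair for `(μ, ν, ε)`: both Schrödinger equations hold, with all
the integrals involved finite (integrable nonnegative integrands) and positive. -/
def IsSchrodingerPair {d : ℕ} (μ ν : Measure (EuclideanSpace ℝ (Fin d))) (ε : ℝ)
    (f g : EuclideanSpace ℝ (Fin d) → ℝ) : Prop :=
  Measurable f ∧ Measurable g ∧
  (∀ x, Integrable (fun y => Real.exp ((g y - ‖x - y‖ ^ 2 / 2) / ε)) ν ∧
    0 < ∫ y, Real.exp ((g y - ‖x - y‖ ^ 2 / 2) / ε) ∂ν ∧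
    f x = -ε * Real.log (∫ y, Real.exp ((g y - ‖x - y‖ ^ 2 / 2) / ε) ∂ν)) ∧
  (∀ y, Integrable (fun x => Real.exp ((f x - ‖y - x‖ ^ 2 / 2) / ε)) μ ∧
    0 < ∫ x, Real.exp ((f x - ‖y - x‖ ^ 2 / 2) / ε) ∂μ ∧
    g y = -ε * Real.log (∫ x, Real.exp ((f x - ‖y - x‖ ^ 2 / 2) / ε) ∂μ))

/-- Assumption (A1): `μ = e^{-V} dx`, `ν = e^{-W} dy` with `V, W` smooth,
`∇²V ≼ α I` and `∇²W ≽ β I` for some `α, β > 0`. -/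
def AssumptionA1 {d : ℕ} (μ ν : Measure (EuclideanSpace ℝ (Fin d)))
    (V W : EuclideanSpace ℝ (Fin d) → ℝ) (α β : ℝ) : Prop :=
  IsProbabilityMeasure μ ∧ IsProbabilityMeasure ν ∧
  μ = volume.withDensity (fun x => ENNReal.ofReal (Real.exp (-V x))) ∧
  ν = volume.withDensity (fun y => ENNReal.ofReal (Real.exp (-W y))) ∧
  ContDiff ℝ (⊤ : ℕ∞) V ∧ ContDiff ℝ (⊤ : ℕ∞) W ∧ 0 < α ∧ 0 < β ∧
  (∀ x v, ⟪fderiv ℝ (fun z => gradient V z) x v, v⟫ ≤ α * ‖v‖ ^ 2) ∧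
  (∀ y v, β * ‖v‖ ^ 2 ≤ ⟪fderiv ℝ (fun z => gradient W z) y v, v⟫)

/-- Assumption (A2): `μ` satisfies a Poincaré inequality. -/
def AssumptionA2 {d : ℕ} (μ : Measure (EuclideanSpace ℝ (Fin d))) : Prop :=
  ∃ CP > (0 : ℝ), ∀ h : EuclideanSpace ℝ (Fin d) → ℝ, ContDiff ℝ (⊤ : ℕ∞) h →
    (∫ x, h x ∂μ) = 0 →
    (∫ x, (h x) ^ 2 ∂μ) ≤ CP * ∫ x, ‖gradient h x‖ ^ 2 ∂μ

/-- Assumption (A3): `μ = e^{-V} dx` has finite differential entropy. -/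
def AssumptionA3 {d : ℕ} (V : EuclideanSpace ℝ (Fin d) → ℝ) : Prop :=
  Integrable (fun x => V x * Real.exp (-V x)) (volume : Measure (EuclideanSpace ℝ (Fin d)))

/-- `φ` is a Brenier potential from `μ` to `ν`: convex, differentiable, and its gradient
pushes `μ` forward to `ν`. -/
def IsBrenierPotential {d : ℕ} (μ ν : Measure (EuclideanSpace ℝ (Fin d)))
    (φ : EuclideanSpace ℝ (Fin d) → ℝ) : Prop :=
  ConvexOn ℝ Set.univ φ ∧ Differentiable ℝ φ ∧
  Measure.map (fun x => gradient φ x) μ = ν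

/-!
Let `T = ∇φ`. Where the Monge–Ampère equation `W ∘ T = V + log det DT` holds classically, take
second differences of both sides at a maximum of `(x, k) ↦ φ (x + k) + φ (x - k) - 2 φ x - L ‖k‖²`.
The log-determinants contribute a nonpositive amount, `V` contributes at most `α ‖k‖²`, and
`W ∘ T` at least `β L² ‖k‖²`, because first-order optimality in `k` gives
`T (x + k) - T (x - k) = 2 L k`. Hence `φ (x + k) + φ (x - k) - 2 φ x ≤ L ‖k‖²` as soon as
`L² > α / β`, and a convex function with this bound has an `L`-Lipschitz gradient.

As `φ` is only `C¹`, the equation is available only almost everywhere, perhaps not at the maximum.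
The comparison of second differences there is replaced by a comparison of volumes: the average of
`φ (· ± k)` touches a rescaling `(1 + κ) φ + c` of `φ` from below, so on suitable neighbourhoods of
the contact set the gradient image of the former has at most about the volume of that of the
latter. A small penalty `κ` makes the maximum exist, and `κ → 0` at the end.
-/

namespace Caffarelli

open Set Filter Topology
open scoped Gradient

section ConvexGradient

variable {E : Type*} [NormedAddCommGroup E] [InnerProductSpace ℝ E] {φ : E → ℝ}

lemma convexOn_comp_line (hφ : ConvexOn ℝ univ φ) (x u : E) :
    ConvexOn ℝ univ fun s : ℝ => φ (x + s • u) := by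
  have hline : (fun s : ℝ => φ (x + s • u)) = φ ∘ AffineMap.lineMap x (x + u) := by
    ext s
    simp [AffineMap.lineMap_apply, add_comm]
  rw [hline]
  exact hφ.comp_affineMap _

lemma hasDerivAt_line (x u : E) (t : ℝ) : HasDerivAt (fun s : ℝ => x + s • u) u t := by
  simpa using ((hasDerivAt_id t).smul_const u).const_add x

variable [CompleteSpace E]

lemma hasDerivAt_comp_line {x u : E} {t : ℝ} (hd : DifferentiableAt ℝ φ (x + t • u)) :
    HasDerivAt (fun s : ℝ => φ (x + s • u)) ⟪∇ φ (x + t • u), u⟫ t := by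
  rw [inner_gradient_left]
  exact hd.hasFDerivAt.comp_hasDerivAt t (hasDerivAt_line x u t)

lemma add_inner_gradient_le (hφ : ConvexOn ℝ univ φ) {x : E} (hd : DifferentiableAt ℝ φ x)
    (z : E) : φ x + ⟪∇ φ x, z - x⟫ ≤ φ z := by
  have hderiv := hasDerivAt_comp_line (x := x) (u := z - x) (t := 0) (by simpa using hd)
  have hslope := (convexOn_comp_line hφ x (z - x)).le_slope_of_hasDerivAt
    (mem_univ 0) (mem_univ 1) zero_lt_one hderiv
  simp only [slope_def_field, zero_smul, add_zero, one_smul, sub_zero, div_one,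
    add_sub_cancel] at hslope
  linarith

lemma gradient_eq_of_subgradient {p z : E} (hd : DifferentiableAt ℝ φ z)
    (hp : ∀ y, φ z + ⟪p, y - z⟫ ≤ φ y) : ∇ φ z = p := by
  have hmin : IsLocalMin (fun y => φ y - innerSL ℝ p y) z := Eventually.of_forall fun y => by
    have := hp y
    simp only [inner_sub_right, innerSL_apply_apply] at this ⊢
    linarith
  have hzero := hmin.hasFDerivAt_eq_zero (hd.hasFDerivAt.sub (innerSL ℝ p).hasFDerivAt)
  refine ext_inner_right ℝ fun v => ?_
  rw [inner_gradient_left]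
  simpa [sub_eq_zero] using DFunLike.congr_fun hzero v

lemma gradient_eq_of_le (hφ : ConvexOn ℝ univ φ) {x z : E} (hx : DifferentiableAt ℝ φ x)
    (hz : DifferentiableAt ℝ φ z) (h : φ z ≤ φ x + ⟪∇ φ x, z - x⟫) : ∇ φ z = ∇ φ x :=
  gradient_eq_of_subgradient hz fun y => by
    have := add_inner_gradient_le hφ hx y
    simp only [inner_sub_right] at this h ⊢
    linarith

lemma inner_gradient_sub_nonneg (hφ : ConvexOn ℝ univ φ) (hd : Differentiable ℝ φ) (x z : E) :
    0 ≤ ⟪∇ φ x - ∇ φ z, x - z⟫ := by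
  have h₁ := add_inner_gradient_le hφ (hd x) z
  have h₂ := add_inner_gradient_le hφ (hd z) x
  simp only [inner_sub_left, inner_sub_right] at h₁ h₂ ⊢
  linarith

lemma continuous_gradient (hφ : ConvexOn ℝ univ φ) (hd : Differentiable ℝ φ) :
    Continuous (∇ φ) := by
  refine continuous_iff_continuousAt.2 fun x => Metric.continuousAt_iff.2 fun ε hε => ?_
  have hlittle := (hasGradientAt_iff_isLittleO.1 (hd x).hasGradientAt).def
    (c := ε / 4) (by positivity)
  obtain ⟨r, hr, hsmall⟩ := Metric.eventually_nhds_iff.1 hlittle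
  refine ⟨r / 4, by positivity, fun {z} hz => ?_⟩
  rw [dist_eq_norm] at hz ⊢
  set q := ∇ φ z - ∇ φ x with hq
  by_contra! hε_le
  have hq_pos : 0 < ‖q‖ := hε.trans_le hε_le
  -- Test the affine minorant at `z` in the direction of `q`, at distance `r / 2` from `x`.
  set u := (r / (2 * ‖q‖)) • q with hu
  have hu_norm : ‖u‖ = r / 2 := by
    rw [hu, norm_smul, Real.norm_of_nonneg (by positivity)]
    field_simp
  have hqu : ⟪q, u⟫ = r / 2 * ‖q‖ := by
    rw [hu, inner_smul_right, real_inner_self_eq_norm_sq]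
    field_simp
  have hupper : φ (x + u) - φ x - ⟪∇ φ x, u⟫ ≤ ε / 4 * (r / 2) := by
    have := hsmall (y := x + u) (by rw [dist_eq_norm, add_sub_cancel_left, hu_norm]; linarith)
    rw [add_sub_cancel_left, hu_norm] at this
    exact (le_abs_self _).trans this
  have hlower : ⟪q, u⟫ - ⟪q, z - x⟫ ≤ φ (x + u) - φ x - ⟪∇ φ x, u⟫ := by
    have h₁ := add_inner_gradient_le hφ (hd z) (x + u)
    have h₂ := add_inner_gradient_le hφ (hd x) z
    simp only [hq, inner_sub_left, inner_sub_right, inner_add_right] at h₁ h₂ ⊢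
    linarith
  have hcs : ⟪q, z - x⟫ ≤ ‖q‖ * (r / 4) := (real_inner_le_norm _ _).trans (by gcongr)
  nlinarith

lemma isPositive_fderiv_gradient (hφ : ConvexOn ℝ univ φ) (hd : Differentiable ℝ φ) (a : E) :
    (fderiv ℝ (∇ φ) a).IsPositive := by
  by_cases hT : DifferentiableAt ℝ (∇ φ) a
  swap
  · simpa only [fderiv_zero_of_not_differentiableAt hT] using ContinuousLinearMap.isPositive_zero
  refine ⟨fun u v => ?_, fun u => ?_⟩
  · have hφ' : ∀ y, HasFDerivAt φ (InnerProductSpace.toDual ℝ E (∇ φ y)) y :=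
      fun y => (hd y).hasGradientAt
    have hsymm := second_derivative_symmetric hφ'
      ((InnerProductSpace.toDual ℝ E).toContinuousLinearEquiv.hasFDerivAt.comp a
        hT.hasFDerivAt) u v
    simpa [real_inner_comm] using hsymm
  · have hline : HasDerivAt (fun s : ℝ => ⟪∇ φ (a + s • u), u⟫) ⟪fderiv ℝ (∇ φ) a u, u⟫ 0 := by
      have hT' : HasFDerivAt (∇ φ) (fderiv ℝ (∇ φ) a) (a + (0 : ℝ) • u) := by
        simpa using hT.hasFDerivAt
      simpa using (hT'.comp_hasDerivAt 0 (hasDerivAt_line a u 0)).inner ℝ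
        (hasDerivAt_const (0 : ℝ) u)
    have hmono : Monotone fun s : ℝ => ⟪∇ φ (a + s • u), u⟫ := fun s t hst => by
      rcases hst.eq_or_lt with rfl | hlt
      · exact le_rfl
      have := inner_gradient_sub_nonneg hφ hd (a + t • u) (a + s • u)
      rw [add_sub_add_left_eq_sub, ← sub_smul, inner_smul_right, inner_sub_left] at this
      exact sub_nonneg.1 (nonneg_of_mul_nonneg_right this (sub_pos.2 hlt))
    have := hline.deriv ▸ hmono.deriv_nonneg
    simpa [ContinuousLinearMap.reApplyInnerSelf_apply] using this

/- Between two points with the same gradient `φ` is affine, so the derivative of `∇ φ` vanishes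
in the direction joining them. -/
lemma eq_of_gradient_eq (hφ : ConvexOn ℝ univ φ) (hd : Differentiable ℝ φ) {a z : E}
    (hT : DifferentiableAt ℝ (∇ φ) a) (hinj : Function.Injective (fderiv ℝ (∇ φ) a))
    (hz : ∇ φ z = ∇ φ a) : z = a := by
  have hconst : ∀ s ∈ Icc (0 : ℝ) 1, ∇ φ (a + s • (z - a)) = ∇ φ a := fun s hs => by
    refine gradient_eq_of_le hφ (hd a) (hd _) ?_
    have hconv := hφ.2 (mem_univ a) (mem_univ z) (sub_nonneg.2 hs.2) hs.1 (by ring)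
    have hgrad := mul_le_mul_of_nonneg_left (add_inner_gradient_le hφ (hd z) a) hs.1
    have hpoint : (1 - s) • a + s • z = a + s • (z - a) := by module
    rw [hpoint, smul_eq_mul, smul_eq_mul] at hconv
    rw [hz, ← neg_sub z a, inner_neg_right] at hgrad
    rw [add_sub_cancel_left, inner_smul_right]
    linarith
  have hT' : HasFDerivAt (∇ φ) (fderiv ℝ (∇ φ) a) (a + (0 : ℝ) • (z - a)) := by
    simpa using hT.hasFDerivAt
  have hderiv := (hT'.comp_hasDerivAt 0 (hasDerivAt_line a (z - a) 0)).hasDerivWithinAt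
    (s := Icc 0 1)
  have hzero := (hasDerivWithinAt_const (0 : ℝ) (Icc 0 1) (∇ φ a)).congr hconst (by simp)
  have hker : fderiv ℝ (∇ φ) a (z - a) = 0 :=
    (uniqueDiffOn_Icc_zero_one 0 (by simp)).eq_deriv _ hderiv hzero
  exact sub_eq_zero.1 (hinj (hker.trans (map_zero _).symm))

end ConvexGradient

section SymmAverage

/-- The mean of the values of `f` at `z + k` and `z - k`; second differences of `f` are
`2 • (symmAverage f k z - f z)`. The codomain is arbitrary because the notion is applied to
a potential as well as to its gradient. -/
noncomputable def symmAverage {E F : Type*} [AddCommGroup E] [AddCommGroup F] [Module ℝ F]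
    (f : E → F) (k z : E) : F :=
  (1 / 2 : ℝ) • (f (z + k) + f (z - k))

variable {E F : Type*} [NormedAddCommGroup E] [NormedAddCommGroup F] [NormedSpace ℝ F]

lemma hasFDerivAt_symmAverage [NormedSpace ℝ E] {f : E → F} {k z : E}
    (h₁ : DifferentiableAt ℝ f (z + k)) (h₂ : DifferentiableAt ℝ f (z - k)) :
    HasFDerivAt (symmAverage f k) (symmAverage (fderiv ℝ f) k z) z :=
  (((hasFDerivAt_comp_add_right k).2 h₁.hasFDerivAt).add
    ((hasFDerivAt_comp_sub k).2 h₂.hasFDerivAt)).const_smul (1 / 2 : ℝ)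

lemma symmAverage_inner_left [InnerProductSpace ℝ E] (T : E → E) (k z v : E) :
    ⟪symmAverage T k z, v⟫ = symmAverage (fun y => ⟪T y, v⟫) k z := by
  simp [symmAverage, inner_smul_left, inner_add_left, mul_add]

variable {φ : E → ℝ}

lemma convexOn_symmAverage [NormedSpace ℝ E] (hφ : ConvexOn ℝ univ φ) (k : E) :
    ConvexOn ℝ univ (symmAverage φ k) := by
  have h₁ : ConvexOn ℝ univ fun z => φ (z + k) := by
    simpa [Function.comp_def] using hφ.translate_left k
  have h₂ : ConvexOn ℝ univ fun z => φ (z - k) := by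
    simpa [Function.comp_def, sub_eq_add_neg] using hφ.translate_left (-k)
  exact (h₁.add h₂).smul (by norm_num)

lemma differentiable_symmAverage [NormedSpace ℝ E] (hd : Differentiable ℝ φ) (k : E) :
    Differentiable ℝ (symmAverage φ k) :=
  fun _ => (hasFDerivAt_symmAverage (hd _) (hd _)).differentiableAt

lemma gradient_symmAverage [InnerProductSpace ℝ E] [CompleteSpace E] (hd : Differentiable ℝ φ)
    (k : E) : ∇ (symmAverage φ k) = symmAverage (∇ φ) k := by
  ext1 z
  refine ext_inner_right ℝ fun v => ?_
  rw [inner_gradient_left, (hasFDerivAt_symmAverage (hd _) (hd _)).fderiv,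
    symmAverage_inner_left]
  simp [symmAverage, inner_gradient_left, mul_add]

end SymmAverage

section Det

open scoped MatrixOrder

variable {n : Type*} [Fintype n] [DecidableEq n]

lemma det_le_sq_det_one_add {M : Matrix n n ℝ} (hM : M.PosSemidef) :
    M.det ≤ ((1 / 2 : ℝ) • (1 + M)).det ^ 2 := by
  set ev := hM.1.eigenvalues with hev
  have hdet : M.det = ∏ i, ev i := by simpa using hM.1.det_eq_prod_eigenvalues
  have hdet_one_add : ((1 / 2 : ℝ) • (1 + M)).det = ∏ i, ((1 + ev i) / 2) := by
    have hchar := Matrix.eval_charpoly M (-1)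
    have hscalar : Matrix.scalar n (-1 : ℝ) - M = (-2 : ℝ) • ((1 / 2 : ℝ) • (1 + M)) := by
      rw [map_neg, map_one]
      module
    rw [hM.1.charpoly_eq, Polynomial.eval_prod, hscalar, Matrix.det_smul] at hchar
    apply mul_left_cancel₀ (pow_ne_zero (Fintype.card n) (by norm_num : (-2 : ℝ) ≠ 0))
    rw [← hchar, ← Finset.card_univ, ← Finset.prod_const, ← Finset.prod_mul_distrib]
    refine Finset.prod_congr rfl fun i _ => ?_
    simp only [Polynomial.eval_sub, Polynomial.eval_X, Polynomial.eval_C, hev,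
      RCLike.ofReal_real_eq_id, id_eq]
    ring
  rw [hdet, hdet_one_add, ← Finset.prod_pow]
  refine Finset.prod_le_prod (fun i _ => hM.eigenvalues_nonneg i) fun i _ => ?_
  nlinarith [sq_nonneg (ev i - 1)]

/- Determinant form of the log-concavity of `det`; congruence by a square root of `A` reduces it
to `A = 1`. -/
lemma det_mul_det_le_sq_det_average {A B : Matrix n n ℝ} (hA : A.PosSemidef)
    (hB : B.PosSemidef) : A.det * B.det ≤ ((1 / 2 : ℝ) • (A + B)).det ^ 2 := by
  obtain ⟨C, rfl⟩ := CStarAlgebra.nonneg_iff_eq_star_mul_self.mp hA.nonneg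
  rw [Matrix.star_eq_conjTranspose]
  by_cases hC : C.det = 0
  · simpa [hC] using sq_nonneg _
  have hCinv : C⁻¹ * C = 1 := Matrix.nonsing_inv_mul C (isUnit_iff_ne_zero.2 hC)
  have hCinv' : C.conjTranspose * (C⁻¹).conjTranspose = 1 := by
    rw [← Matrix.conjTranspose_mul, hCinv, Matrix.conjTranspose_one]
  set M := (C⁻¹).conjTranspose * B * C⁻¹ with hM
  have hBM : B = C.conjTranspose * M * C := by
    calc B = (C.conjTranspose * (C⁻¹).conjTranspose) * B * (C⁻¹ * C) := by
          rw [hCinv, hCinv', one_mul, mul_one]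
      _ = C.conjTranspose * M * C := by rw [hM]; simp only [Matrix.mul_assoc]
  have hsum : (1 / 2 : ℝ) • (C.conjTranspose * C + B)
      = C.conjTranspose * ((1 / 2 : ℝ) • (1 + M)) * C := by
    rw [hBM]
    simp [Matrix.mul_add, Matrix.add_mul, Matrix.mul_assoc]
  have hMdet := mul_le_mul_of_nonneg_left
    (det_le_sq_det_one_add (hB.conjTranspose_mul_mul_same C⁻¹)) (by positivity : 0 ≤ C.det ^ 4)
  rw [hsum, hBM]
  simp only [Matrix.det_mul, Matrix.det_conjTranspose, star_trivial]
  linarith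

variable {E : Type*} [NormedAddCommGroup E] [InnerProductSpace ℝ E] [FiniteDimensional ℝ E]
  {A B : E →L[ℝ] E}

lemma det_nonneg_of_isPositive (hA : A.IsPositive) : 0 ≤ A.det := by
  have h := ((LinearMap.posSemidef_toMatrix_iff (stdOrthonormalBasis ℝ E)).2
    hA.toLinearMap).det_nonneg
  rwa [LinearMap.det_toMatrix] at h

lemma sqrt_det_mul_det_le_det_average (hA : A.IsPositive) (hB : B.IsPositive) :
    √(A.det * B.det) ≤ ((1 / 2 : ℝ) • (A + B)).det := by
  let b := stdOrthonormalBasis ℝ E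
  have h := det_mul_det_le_sq_det_average ((LinearMap.posSemidef_toMatrix_iff b).2 hA.toLinearMap)
    ((LinearMap.posSemidef_toMatrix_iff b).2 hB.toLinearMap)
  rw [← map_add, ← map_smul] at h
  simp only [LinearMap.det_toMatrix] at h
  exact Real.sqrt_le_iff.2
    ⟨det_nonneg_of_isPositive ((hA.add hB).smul_of_nonneg (by norm_num)), h⟩

end Det

section Superlinear

variable {E : Type*} [NormedAddCommGroup E]

/-- Growth faster than any linear function. It is the form of coercivity under which `∇ φ` is
onto, and is phrased through lower bounds so that no division by `‖x‖` occurs. -/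
def Superlinear (φ : E → ℝ) : Prop :=
  ∀ K : ℝ, ∃ C : ℝ, ∀ x, K * ‖x‖ - C ≤ φ x

lemma Superlinear.const_mul_add_const {φ : E → ℝ} (h : Superlinear φ) {a : ℝ} (ha : 0 < a)
    (b : ℝ) : Superlinear fun x => a * φ x + b := fun K => by
  obtain ⟨C, hC⟩ := h (K / a)
  refine ⟨a * C - b, fun x => ?_⟩
  calc K * ‖x‖ - (a * C - b) = a * (K / a * ‖x‖ - C) + b := by field_simp; ring
    _ ≤ a * φ x + b := by gcongr; exact hC x

variable [InnerProductSpace ℝ E]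

lemma Superlinear.sub_inner {φ : E → ℝ} (h : Superlinear φ) (p : E) :
    Superlinear fun x => φ x - ⟪p, x⟫ := fun K => by
  obtain ⟨C, hC⟩ := h (K + ‖p‖)
  exact ⟨C, fun x => by linarith [hC x, real_inner_le_norm p x]⟩

variable [FiniteDimensional ℝ E]

lemma Superlinear.tendsto_cocompact_atTop {φ : E → ℝ} (h : Superlinear φ) :
    Tendsto φ (cocompact E) atTop := by
  obtain ⟨C, hC⟩ := h 1
  refine tendsto_atTop_mono hC ?_
  simpa only [one_mul, sub_eq_add_neg] using
    tendsto_atTop_add_const_right _ (-C) (tendsto_norm_cocompact_atTop (E := E))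

lemma Superlinear.surjective_gradient {φ : E → ℝ} (h : Superlinear φ) (hd : Differentiable ℝ φ) :
    Function.Surjective (∇ φ) := fun p => by
  have hcont : Continuous fun z => φ z - ⟪p, z⟫ := hd.continuous.sub (by fun_prop)
  obtain ⟨z, hz⟩ := hcont.exists_forall_le (h.sub_inner p).tendsto_cocompact_atTop
  refine ⟨z, gradient_eq_of_subgradient (hd z) fun y => ?_⟩
  have := hz y
  rw [inner_sub_right]
  linarith

end Superlinear

section AeDifferentiable

variable {E : Type*} [NormedAddCommGroup E] [InnerProductSpace ℝ E]

lemma antilipschitzWith_add_of_monotone {T : E → E} (hT : ∀ x z, 0 ≤ ⟪T x - T z, x - z⟫) :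
    AntilipschitzWith 1 fun x => x + T x :=
  AntilipschitzWith.of_le_mul_dist fun x z => by
    simp only [dist_eq_norm, NNReal.coe_one, one_mul]
    have hsplit : ⟪x + T x - (z + T z), x - z⟫ = ‖x - z‖ ^ 2 + ⟪T x - T z, x - z⟫ := by
      rw [← real_inner_self_eq_norm_sq, ← inner_add_left]
      congr 1
      abel
    have hcs := real_inner_le_norm (x + T x - (z + T z)) (x - z)
    by_contra! hlt
    nlinarith [hT x z, norm_nonneg (x + T x - (z + T z)), norm_nonneg (x - z)]

lemma hasGradientAt_half_norm_sq_add [CompleteSpace E] {φ : E → ℝ} {x : E}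
    (hd : DifferentiableAt ℝ φ x) :
    HasGradientAt (fun y => ‖y‖ ^ 2 / 2 + φ y) (x + ∇ φ x) x := by
  have h := ((hasStrictFDerivAt_norm_sq x).hasFDerivAt.mul_const (1 / 2 : ℝ)).add
    hd.hasFDerivAt
  rw [hasGradientAt_iff_hasFDerivAt]
  refine (h.congr_fderiv ?_).congr_of_eventuallyEq (Eventually.of_forall fun y => ?_)
  · ext u
    simp
  · simp [div_eq_mul_inv]

variable [FiniteDimensional ℝ E]

lemma surjective_add_gradient {φ : E → ℝ} (hφ : ConvexOn ℝ univ φ) (hd : Differentiable ℝ φ) :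
    Function.Surjective fun x => x + ∇ φ x := by
  have hsuper : Superlinear fun x => ‖x‖ ^ 2 / 2 + φ x := fun K => by
    refine ⟨(K + ‖∇ φ 0‖) ^ 2 / 2 - φ 0, fun x => ?_⟩
    have hminor := add_inner_gradient_le hφ (hd 0) x
    have hcs := neg_le_of_abs_le (abs_real_inner_le_norm (∇ φ 0) x)
    rw [sub_zero] at hminor
    nlinarith [sq_nonneg (‖x‖ - (K + ‖∇ φ 0‖))]
  have hgrad := fun x => hasGradientAt_half_norm_sq_add (hd x)
  have := hsuper.surjective_gradient fun x => (hgrad x).differentiableAt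
  rwa [funext fun x => (hgrad x).gradient] at this

variable [MeasurableSpace E] [BorelSpace E] (m : Measure E) [m.IsAddHaarMeasure]

lemma measure_image_eq_zero_of_lipschitzWith {J : E → E} {K : NNReal} (hJ : LipschitzWith K J)
    {s : Set E} (hs : m s = 0) : m (J '' s) = 0 := by
  have hμH : (Measure.hausdorffMeasure (Module.finrank ℝ E) : Measure E) ≪ m :=
    Measure.absolutelyContinuous_isAddHaarMeasure _ _
  have hm : m ≪ (Measure.hausdorffMeasure (Module.finrank ℝ E) : Measure E) :=
    Measure.absolutelyContinuous_isAddHaarMeasure _ _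
  have hle := hJ.hausdorffMeasure_image_le (d := Module.finrank ℝ E) (by positivity) s
  rw [hμH hs, mul_zero] at hle
  exact hm (nonpos_iff_eq_zero.1 hle)

/- Rademacher's theorem for the inverse: its non-differentiability points and, by Sard, its
critical points have null image. -/
lemma ae_differentiableAt_of_antilipschitzWith {S : E → E} {K : NNReal}
    (hS : AntilipschitzWith K S) (hcont : Continuous S) (hsurj : Function.Surjective S) :
    ∀ᵐ x ∂m, DifferentiableAt ℝ S x := by
  obtain ⟨J, hJ⟩ := hsurj.hasRightInverse
  have hJS : Function.LeftInverse J S := hJ.leftInverse_of_injective hS.injective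
  have hJlip : LipschitzWith K J := hS.to_rightInverse hJ
  have hnondiff : m (J '' {p | ¬ DifferentiableAt ℝ J p}) = 0 :=
    measure_image_eq_zero_of_lipschitzWith m hJlip hJlip.ae_differentiableAt
  have hcrit : m (J '' {p | DifferentiableAt ℝ J p ∧ (fderiv ℝ J p).det = 0}) = 0 :=
    addHaar_image_eq_zero_of_det_fderivWithin_eq_zero m
      (fun p hp => hp.1.hasFDerivAt.hasFDerivWithinAt) fun p hp => hp.2
  refine measure_mono_null (fun x hx => ?_) (measure_union_null hnondiff hcrit)
  by_contra hx'
  simp only [mem_union, not_or] at hx'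
  have hJd : DifferentiableAt ℝ J (S x) := by
    by_contra hJd
    exact hx'.1 ⟨S x, hJd, hJS x⟩
  have hdet : (fderiv ℝ J (S x)).det ≠ 0 := fun hdet => hx'.2 ⟨S x, ⟨hJd, hdet⟩, hJS x⟩
  have hderiv : HasFDerivAt J
      (((fderiv ℝ J (S x)).toContinuousLinearEquivOfDetNeZero hdet : E ≃L[ℝ] E) : E →L[ℝ] E)
      (S x) := by
    simpa using hJd.hasFDerivAt
  exact hx (HasFDerivAt.of_local_left_inverse hcont.continuousAt hderiv
    (Eventually.of_forall hJS)).differentiableAt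

lemma ae_differentiableAt_gradient {φ : E → ℝ} (hφ : ConvexOn ℝ univ φ)
    (hd : Differentiable ℝ φ) : ∀ᵐ x ∂m, DifferentiableAt ℝ (∇ φ) x := by
  have hanti := antilipschitzWith_add_of_monotone (inner_gradient_sub_nonneg hφ hd)
  filter_upwards [ae_differentiableAt_of_antilipschitzWith m hanti
    (continuous_id.add (continuous_gradient hφ hd)) (surjective_add_gradient hφ hd)] with x hx
  simpa using hx.sub differentiableAt_id

end AeDifferentiable

section ChangeOfVariables

variable {E : Type*} [NormedAddCommGroup E] [NormedSpace ℝ E]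

/-- The points where `T` has an invertible derivative; this is where the change of variables
formula can be used. -/
def regularPoints (T : E → E) : Set E :=
  {x | DifferentiableAt ℝ T x ∧ (fderiv ℝ T x).det ≠ 0}

lemma injOn_regularPoints {T : E → E} (hinj : ∀ x ∈ regularPoints T, ∀ z, T z = T x → z = x) :
    InjOn T (regularPoints T) :=
  fun _ _ _ hx hzx => hinj _ hx _ hzx

lemma setLIntegral_inter_regularPoints [MeasurableSpace E] {m : Measure E} {T : E → E}
    (hreg : ∀ᵐ x ∂m, x ∈ regularPoints T) (s : Set E) (f : E → ENNReal) :
    ∫⁻ x in s ∩ regularPoints T, f x ∂m = ∫⁻ x in s, f x ∂m :=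
  setLIntegral_congr (inter_ae_eq_left_of_ae_eq_univ (eventuallyEq_univ.2 hreg))

variable [FiniteDimensional ℝ E] [MeasurableSpace E] [BorelSpace E] {T : E → E}

lemma measurable_det_fderiv (T : E → E) : Measurable fun x => (fderiv ℝ T x).det :=
  ContinuousLinearMap.continuous_det.measurable.comp (measurable_fderiv ℝ T)

lemma measurableSet_regularPoints (T : E → E) : MeasurableSet (regularPoints T) :=
  (measurableSet_of_differentiableAt ℝ T).inter
    ((measurableSet_singleton (0 : ℝ)).compl.preimage (measurable_det_fderiv T))

variable {m μ : Measure E} [m.IsAddHaarMeasure]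

lemma ae_mem_regularPoints (hT : Measurable T) (hdiff : ∀ᵐ x ∂m, DifferentiableAt ℝ T x)
    (hμ : m ≪ μ) (hmap : μ.map T ≪ m) : ∀ᵐ x ∂m, x ∈ regularPoints T := by
  set Z := {x | DifferentiableAt ℝ T x ∧ (fderiv ℝ T x).det = 0}
  have hsard : m (T '' Z) = 0 := addHaar_image_eq_zero_of_det_fderivWithin_eq_zero m
    (fun x hx => hx.1.hasFDerivAt.hasFDerivWithinAt) fun x hx => hx.2
  have hcrit : m Z = 0 := hμ (measure_mono_null (subset_preimage_image T Z)
    (Measure.preimage_null_of_map_null hT.aemeasurable (hmap hsard)))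
  filter_upwards [hdiff, measure_eq_zero_iff_ae_notMem.1 hcrit] with x hx hxZ
  exact ⟨hx, fun hdet => hxZ ⟨hx, hdet⟩⟩

variable (hinj : ∀ x ∈ regularPoints T, ∀ z, T z = T x → z = x)

include hinj

lemma measurableSet_image_inter_regularPoints {s : Set E} (hs : MeasurableSet s) :
    MeasurableSet (T '' (s ∩ regularPoints T)) :=
  measurable_image_of_fderivWithin (hs.inter (measurableSet_regularPoints T))
    (fun _ hx => hx.2.1.hasFDerivAt.hasFDerivWithinAt)
    ((injOn_regularPoints hinj).mono inter_subset_right)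

lemma abs_det_fderiv_mul_ae_eq {f g : E → ENNReal} (hf : Measurable f) (hg : Measurable g)
    (hT : Measurable T) (hreg : ∀ᵐ x ∂m, x ∈ regularPoints T)
    (hmap : (m.withDensity f).map T = m.withDensity g) :
    (fun x => ENNReal.ofReal |(fderiv ℝ T x).det| * g (T x)) =ᵐ[m] f := by
  have hdet := measurable_det_fderiv T
  refine ae_eq_of_forall_setLIntegral_eq_of_sigmaFinite (by fun_prop) hf fun s hs _ => ?_
  have hsr := hs.inter (measurableSet_regularPoints T)
  have himage := measurableSet_image_inter_regularPoints hinj hs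
  have hpreimage : T ⁻¹' (T '' (s ∩ regularPoints T)) = s ∩ regularPoints T := by
    refine (subset_preimage_image T _).antisymm' fun x => ?_
    rintro ⟨z, hz, hzx⟩
    rwa [hinj z hz.2 x hzx.symm]
  rw [← setLIntegral_inter_regularPoints hreg s, ← setLIntegral_inter_regularPoints hreg s f,
    ← lintegral_image_eq_lintegral_abs_det_fderiv_mul m hsr
      (fun _ hx => hx.2.1.hasFDerivAt.hasFDerivWithinAt)
      ((injOn_regularPoints hinj).mono inter_subset_right) g,
    ← withDensity_apply _ himage, ← withDensity_apply _ hsr, ← hmap,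
    Measure.map_apply hT himage, hpreimage]

lemma measure_image_le_lintegral_abs_det_fderiv (hT : Measurable T)
    (hreg : ∀ᵐ x ∂m, x ∈ regularPoints T) (hμ : μ ≪ m) (hmap : m ≪ μ.map T) {s : Set E}
    (hs : MeasurableSet s) : m (T '' s) ≤ ∫⁻ x in s, ENNReal.ofReal |(fderiv ℝ T x).det| ∂m := by
  have hnull : m (T '' regularPoints T)ᶜ = 0 := by
    have hmeas := measurableSet_image_inter_regularPoints hinj MeasurableSet.univ
    rw [univ_inter] at hmeas
    apply hmap
    rw [Measure.map_apply hT hmeas.compl]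
    exact measure_mono_null (fun x hx hxr => hx ⟨x, hxr, rfl⟩) (hμ hreg)
  have hcover : T '' s ⊆ T '' (s ∩ regularPoints T) ∪ (T '' regularPoints T)ᶜ := by
    rintro _ ⟨x, hx, rfl⟩
    refine or_iff_not_imp_right.2 fun hxr => ?_
    obtain ⟨z, hz, hzx⟩ := not_notMem.1 hxr
    rw [← hzx]
    exact ⟨z, ⟨hinj z hz x hzx.symm ▸ hx, hz⟩, rfl⟩
  calc m (T '' s) ≤ m (T '' (s ∩ regularPoints T)) + m (T '' regularPoints T)ᶜ :=
        (measure_mono hcover).trans (measure_union_le _ _)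
    _ = m (T '' (s ∩ regularPoints T)) := by rw [hnull, add_zero]
    _ ≤ ∫⁻ x in s ∩ regularPoints T, ENNReal.ofReal |(fderiv ℝ T x).det| ∂m :=
        addHaar_image_le_lintegral_abs_det_fderiv m (hs.inter (measurableSet_regularPoints T))
          fun _ hx => hx.2.1.hasFDerivAt.hasFDerivWithinAt
    _ ≤ ∫⁻ x in s, ENNReal.ofReal |(fderiv ℝ T x).det| ∂m := lintegral_mono_set inter_subset_left

lemma lintegral_abs_det_fderiv_le_measure_image (hdiff : ∀ᵐ x ∂m, DifferentiableAt ℝ T x)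
    {s : Set E} (hs : MeasurableSet s) :
    ∫⁻ x in s, ENNReal.ofReal |(fderiv ℝ T x).det| ∂m ≤ m (T '' s) := by
  have hreg := measurableSet_regularPoints T
  have hcrit : ∫⁻ x in s \ regularPoints T, ENNReal.ofReal |(fderiv ℝ T x).det| ∂m = 0 := by
    refine (setLIntegral_congr_fun_ae (hs.diff hreg) ?_).trans lintegral_zero
    filter_upwards [hdiff] with x hx hxs
    have hdet : (fderiv ℝ T x).det = 0 := not_not.1 fun hdet => hxs.2 ⟨hx, hdet⟩
    simp [hdet]
  rw [← lintegral_inter_add_sdiff _ s hreg, hcrit, add_zero,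
    lintegral_abs_det_fderiv_eq_addHaar_image m (hs.inter hreg)
      (fun _ hx => hx.2.1.hasFDerivAt.hasFDerivWithinAt)
      ((injOn_regularPoints hinj).mono inter_subset_right)]
  exact measure_mono (image_mono inter_subset_left)

end ChangeOfVariables

section MongeAmpere

/-- The measure `e^{-V} m`. It is not required to be finite. -/
noncomputable def gibbsMeasure {E : Type*} [MeasurableSpace E] (m : Measure E) (V : E → ℝ) :
    Measure E :=
  m.withDensity fun x => ENNReal.ofReal (exp (-V x))

lemma gibbsMeasure_absolutelyContinuous {E : Type*} [MeasurableSpace E] (m : Measure E)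
    (V : E → ℝ) : gibbsMeasure m V ≪ m :=
  withDensity_absolutelyContinuous _ _

variable {E : Type*} [NormedAddCommGroup E]

section GibbsMeasure

variable [MeasurableSpace E] [BorelSpace E] {V : E → ℝ}

lemma measurable_gibbs_density (hV : Continuous V) :
    Measurable fun x => ENNReal.ofReal (exp (-V x)) := by
  fun_prop

lemma absolutelyContinuous_gibbsMeasure (m : Measure E) (hV : Continuous V) :
    m ≪ gibbsMeasure m V :=
  withDensity_absolutelyContinuous' (measurable_gibbs_density hV).aemeasurable
    (Eventually.of_forall fun x => by simp [exp_pos])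

end GibbsMeasure

variable [InnerProductSpace ℝ E] [FiniteDimensional ℝ E] {φ : E → ℝ}
  (hφ : ConvexOn ℝ univ φ) (hd : Differentiable ℝ φ)

include hφ hd

lemma eq_of_gradient_eq_of_mem_regularPoints :
    ∀ x ∈ regularPoints (∇ φ), ∀ z, ∇ φ z = ∇ φ x → z = x := fun _ hx _ hzx =>
  eq_of_gradient_eq hφ hd hx.1
    ((fderiv ℝ (∇ φ) _).toContinuousLinearEquivOfDetNeZero hx.2).injective hzx

lemma det_fderiv_gradient_nonneg (x : E) : 0 ≤ (fderiv ℝ (∇ φ) x).det :=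
  det_nonneg_of_isPositive (isPositive_fderiv_gradient hφ hd x)

variable [MeasurableSpace E] [BorelSpace E] {V W : E → ℝ}

variable {m : Measure E} [m.IsAddHaarMeasure] (hV : Continuous V) (hW : Continuous W)
  (hmap : (gibbsMeasure m V).map (∇ φ) = gibbsMeasure m W)

include hV hmap

lemma ae_mem_regularPoints_gradient : ∀ᵐ x ∂m, x ∈ regularPoints (∇ φ) :=
  ae_mem_regularPoints (continuous_gradient hφ hd).measurable
    (ae_differentiableAt_gradient m hφ hd) (absolutelyContinuous_gibbsMeasure m hV)
    (hmap ▸ gibbsMeasure_absolutelyContinuous m W)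

include hW

lemma ae_det_fderiv_gradient_eq :
    ∀ᵐ x ∂m, (fderiv ℝ (∇ φ) x).det = exp (W (∇ φ x) - V x) := by
  filter_upwards [abs_det_fderiv_mul_ae_eq (eq_of_gradient_eq_of_mem_regularPoints hφ hd)
    (measurable_gibbs_density hV) (measurable_gibbs_density hW)
    (continuous_gradient hφ hd).measurable (ae_mem_regularPoints_gradient hφ hd hV hmap)
    hmap] with x hx
  have hdet := det_fderiv_gradient_nonneg hφ hd x
  rw [abs_of_nonneg hdet, ← ENNReal.ofReal_mul hdet,
    ENNReal.ofReal_eq_ofReal_iff (by positivity) (by positivity)] at hx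
  rw [sub_eq_add_neg, exp_add, ← hx, mul_left_comm, ← exp_add, add_neg_cancel, exp_zero, mul_one]

lemma measure_image_gradient_le {s : Set E} (hs : MeasurableSet s) :
    m (∇ φ '' s) ≤ ∫⁻ x in s, ENNReal.ofReal (exp (W (∇ φ x) - V x)) ∂m := by
  have hle := measure_image_le_lintegral_abs_det_fderiv
    (eq_of_gradient_eq_of_mem_regularPoints hφ hd) (continuous_gradient hφ hd).measurable
    (ae_mem_regularPoints_gradient hφ hd hV hmap) (gibbsMeasure_absolutelyContinuous m V)
    (hmap ▸ absolutelyContinuous_gibbsMeasure m hW) hs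
  refine hle.trans_eq (lintegral_congr_ae (ae_restrict_of_ae ?_))
  filter_upwards [ae_det_fderiv_gradient_eq hφ hd hV hW hmap] with x hx
  rw [hx, abs_exp]

lemma ae_exp_symmAverage_le_det (k : E) :
    ∀ᵐ z ∂m, exp (symmAverage (fun x => W (∇ φ x) - V x) k z)
      ≤ (fderiv ℝ (∇ (symmAverage φ k)) z).det := by
  have hae : ∀ᵐ x ∂m, DifferentiableAt ℝ (∇ φ) x ∧
      (fderiv ℝ (∇ φ) x).det = exp (W (∇ φ x) - V x) :=
    (ae_differentiableAt_gradient m hφ hd).and (ae_det_fderiv_gradient_eq hφ hd hV hW hmap)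
  filter_upwards [(measurePreserving_add_right m k).quasiMeasurePreserving.ae hae,
    (measurePreserving_sub_right m k).quasiMeasurePreserving.ae hae] with z ⟨hd₁, hdet₁⟩
    ⟨hd₂, hdet₂⟩
  rw [gradient_symmAverage hd, (hasFDerivAt_symmAverage hd₁ hd₂).fderiv]
  have hdet := sqrt_det_mul_det_le_det_average (isPositive_fderiv_gradient hφ hd (z + k))
    (isPositive_fderiv_gradient hφ hd (z - k))
  rw [hdet₁, hdet₂, ← exp_add, sqrt_eq_rpow, ← exp_mul, mul_comm] at hdet
  exact hdet

lemma lintegral_le_measure_image_gradient_symmAverage (k : E) {s : Set E}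
    (hs : MeasurableSet s) :
    ∫⁻ z in s, ENNReal.ofReal (exp (symmAverage (fun x => W (∇ φ x) - V x) k z)) ∂m
      ≤ m (∇ (symmAverage φ k) '' s) := by
  have hconv := convexOn_symmAverage hφ k
  have hdiff := differentiable_symmAverage hd k
  refine (lintegral_mono_ae (ae_restrict_of_ae ?_)).trans
    (lintegral_abs_det_fderiv_le_measure_image
      (eq_of_gradient_eq_of_mem_regularPoints hconv hdiff)
      (ae_differentiableAt_gradient m hconv hdiff) hs)
  filter_upwards [ae_exp_symmAverage_le_det hφ hd hV hW hmap k] with z hz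
  exact ENNReal.ofReal_le_ofReal (hz.trans (le_abs_self _))

end MongeAmpere

section Touching

lemma exists_pos_sublevel_subset {X : Type*} [TopologicalSpace X] {f : X → ℝ} {U : Set X}
    (hf : Continuous f) (hcompact : IsCompact {z | f z ≤ 1}) (hU : IsOpen U)
    (hsub : {z | f z ≤ 0} ⊆ U) : ∃ t > 0, {z | f z ≤ t} ⊆ U := by
  have hpos : ∀ z ∈ {z | f z ≤ 1} \ U, 0 < f z := fun z hz =>
    not_le.1 fun h => hz.2 (hsub h)
  obtain ⟨a, ha, hle⟩ := (hcompact.diff hU).exists_forall_le' hf.continuousOn hpos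
  refine ⟨min 1 (a / 2), by positivity, fun z (hz : f z ≤ min 1 (a / 2)) => ?_⟩
  by_contra hzU
  have hfz : f z ≤ 1 := hz.trans (min_le_left _ _)
  linarith [hle z ⟨hfz, hzU⟩, hz.trans (min_le_right _ _)]

lemma setLIntegral_ofReal_pos_of_isOpen {X : Type*} [TopologicalSpace X]
    [MeasurableSpace X] [OpensMeasurableSpace X] {m : Measure X} [m.IsOpenPosMeasure] {f : X → ℝ}
    (hf : Continuous f) (hpos : ∀ z, 0 < f z) {Ω : Set X} (hΩ : IsOpen Ω)
    (hne : Ω.Nonempty) :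
    0 < ∫⁻ z in Ω, ENNReal.ofReal (f z) ∂m := by
  refine (setLIntegral_pos_iff hf.measurable.ennreal_ofReal).2 ?_
  rw [Function.support_eq_univ fun z => (ENNReal.ofReal_pos.2 (hpos z)).ne', univ_inter]
  exact hΩ.measure_pos m hne

variable {E : Type*} [NormedAddCommGroup E] [InnerProductSpace ℝ E]

section Bregman

variable [CompleteSpace E]

/-- The Bregman divergence of `φ`: the height of `φ` above its tangent plane at `x`. -/
noncomputable def bregman (φ : E → ℝ) (x z : E) : ℝ :=
  φ z - φ x - ⟪∇ φ x, z - x⟫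

variable {φ : E → ℝ}

lemma bregman_self (φ : E → ℝ) (x : E) : bregman φ x x = 0 := by
  simp [bregman]

lemma bregman_nonneg (hφ : ConvexOn ℝ univ φ) (hd : Differentiable ℝ φ) (x z : E) :
    0 ≤ bregman φ x z := by
  have := add_inner_gradient_le hφ (hd x) z
  rw [bregman]
  linarith

lemma gradient_eq_of_bregman_nonpos (hφ : ConvexOn ℝ univ φ) (hd : Differentiable ℝ φ) {x z : E}
    (h : bregman φ x z ≤ 0) : ∇ φ z = ∇ φ x :=
  gradient_eq_of_le hφ (hd x) (hd z) (by rw [bregman] at h; linarith)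

lemma continuous_bregman (hd : Differentiable ℝ φ) (x : E) : Continuous (bregman φ x) := by
  have := hd.continuous
  unfold bregman
  fun_prop

lemma bregman_symmAverage (hd : Differentiable ℝ φ) (k x z : E) :
    bregman (symmAverage φ k) x z =
      (bregman φ (x + k) (z + k) + bregman φ (x - k) (z - k)) / 2 := by
  simp only [bregman, gradient_symmAverage hd, symmAverage_inner_left, add_sub_add_right_eq_sub,
    sub_sub_sub_cancel_right]
  simp only [symmAverage, smul_eq_mul]
  ring

lemma gradient_add_sub_eq_of_bregman_symmAverage_nonpos (hφ : ConvexOn ℝ univ φ)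
    (hd : Differentiable ℝ φ) {k x z : E} (h : bregman (symmAverage φ k) x z ≤ 0) :
    ∇ φ (z + k) = ∇ φ (x + k) ∧ ∇ φ (z - k) = ∇ φ (x - k) := by
  rw [bregman_symmAverage hd] at h
  have h₁ := bregman_nonneg hφ hd (x + k) (z + k)
  have h₂ := bregman_nonneg hφ hd (x - k) (z - k)
  exact ⟨gradient_eq_of_bregman_nonpos hφ hd (by linarith),
    gradient_eq_of_bregman_nonpos hφ hd (by linarith)⟩

lemma gradient_const_mul_add_const (hd : Differentiable ℝ φ) (a b : ℝ) :
    ∇ (fun z => a * φ z + b) = a • ∇ φ := by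
  ext1 z
  refine HasGradientAt.gradient ?_
  rw [hasGradientAt_iff_hasFDerivAt]
  simpa using! ((hd z).hasFDerivAt.const_mul a).add_const b

lemma gradient_eq_of_touch {v w : E → ℝ} (hv : ConvexOn ℝ univ v) {x : E}
    (hdv : DifferentiableAt ℝ v x) (hdw : DifferentiableAt ℝ w x) (hle : v ≤ w)
    (htouch : v x = w x) : ∇ w x = ∇ v x :=
  gradient_eq_of_subgradient hdw fun y =>
    htouch ▸ (add_inner_gradient_le hv hdv y).trans (hle y)

lemma bregman_le_bregman_of_touch {v w : E → ℝ} {x : E} (hle : v ≤ w) (htouch : v x = w x)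
    (hgrad : ∇ w x = ∇ v x) (z : E) : bregman v x z ≤ bregman w x z := by
  have := hle z
  rw [bregman, bregman, hgrad, htouch]
  linarith

end Bregman

variable [FiniteDimensional ℝ E] {v w : E → ℝ}

lemma symmAverage_sub_eq_of_bregman_nonpos {φ : E → ℝ} (hφ : ConvexOn ℝ univ φ)
    (hd : Differentiable ℝ φ) {κ c : ℝ} (hκ : 0 < 1 + κ) {k x z : E}
    (hle : ∀ z, symmAverage φ k z ≤ (1 + κ) * φ z + c)
    (htouch : symmAverage φ k x = (1 + κ) * φ x + c)
    (hz : bregman (fun z => (1 + κ) * φ z + c) x z ≤ 0) (W : E → ℝ) :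
    symmAverage (fun x => W (∇ φ x)) k z - W (∇ φ z) =
      symmAverage (fun x => W (∇ φ x)) k x - W (∇ φ x) := by
  have hconv : ConvexOn ℝ univ fun z => (1 + κ) * φ z + c := (hφ.smul hκ.le).add_const c
  have hdw : Differentiable ℝ fun z => (1 + κ) * φ z + c := (hd.const_mul _).add_const c
  have hgrad := gradient_eq_of_touch (convexOn_symmAverage hφ k)
    (differentiable_symmAverage hd k x) (hdw x) hle htouch
  obtain ⟨h₁, h₂⟩ := gradient_add_sub_eq_of_bregman_symmAverage_nonpos hφ hd
    ((bregman_le_bregman_of_touch hle htouch hgrad z).trans hz)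
  have h₀ : ∇ φ z = ∇ φ x := by
    have := gradient_eq_of_bregman_nonpos hconv hdw hz
    rw [gradient_const_mul_add_const hd] at this
    exact smul_right_injective E hκ.ne' this
  simp only [symmAverage, h₀, h₁, h₂]

lemma Superlinear.isCompact_bregman_le (hw : Superlinear w) (hd : Differentiable ℝ w) (x : E)
    (t : ℝ) : IsCompact {z | bregman w x z ≤ t} := by
  have hsuper : Superlinear (bregman w x) := by
    convert (hw.sub_inner (∇ w x)).const_mul_add_const one_pos (⟪∇ w x, x⟫ - w x) using 2 with z
    rw [bregman, inner_sub_right]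
    ring
  obtain ⟨K, hK, hsub⟩ := mem_cocompact'.1
    (hsuper.tendsto_cocompact_atTop.eventually_gt_atTop t)
  exact hK.of_isClosed_subset (isClosed_le (continuous_bregman hd x) continuous_const)
    fun z (hz : bregman w x z ≤ t) => hsub (not_lt.2 hz)

lemma exists_gradient_eq_homothety (hv : ConvexOn ℝ univ v) (hdv : Differentiable ℝ v)
    (hdw : Differentiable ℝ w) (hw : Superlinear w) {x z₁ : E} {ρ s : ℝ} (hρ : 0 ≤ ρ)
    (hconv : ConvexOn ℝ univ w) (hgrad : ∇ w x = ∇ v x)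
    (hz₁ : bregman w x z₁ < ρ * bregman v x z₁ + s) :
    ∃ z₂, bregman w x z₂ < ρ * bregman v x z₂ + s ∧
      ∇ w z₂ = AffineMap.homothety (∇ w x) ρ (∇ v z₁) := by
  obtain ⟨z₂, hz₂⟩ := hw.surjective_gradient hdw (AffineMap.homothety (∇ w x) ρ (∇ v z₁))
  refine ⟨z₂, ?_, hz₂⟩
  have hw₂ := add_inner_gradient_le hconv (hdw z₂) z₁
  have hv₁ := mul_le_mul_of_nonneg_left (add_inner_gradient_le hv (hdv z₁) z₂) hρ
  simp only [hz₂, AffineMap.homothety_apply, vsub_eq_sub, vadd_eq_add, bregman, hgrad,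
    inner_add_left, inner_smul_left, inner_sub_left, inner_sub_right, conj_trivial]
    at hw₂ hv₁ hz₁ ⊢
  linarith

variable [MeasurableSpace E] [BorelSpace E]

lemma exists_isOpen_measure_image_gradient_le (m : Measure E) [m.IsAddHaarMeasure]
    (hv : ConvexOn ℝ univ v) (hdv : Differentiable ℝ v) (hw : ConvexOn ℝ univ w)
    (hdw : Differentiable ℝ w) (hsuper : Superlinear w) (hle : v ≤ w) {x : E}
    (htouch : v x = w x) {U : Set E} (hU : IsOpen U) (hsub : {z | bregman w x z ≤ 0} ⊆ U)
    {ρ : ℝ} (hρ₀ : 0 < ρ) (hρ₁ : ρ < 1) :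
    ∃ Ω ⊆ U, IsOpen Ω ∧ x ∈ Ω ∧ Bornology.IsBounded Ω ∧
      ENNReal.ofReal (ρ ^ Module.finrank ℝ E) * m (∇ v '' Ω) ≤ m (∇ w '' Ω) := by
  have hgrad := gradient_eq_of_touch hv (hdv x) (hdw x) hle htouch
  have hcompact := hsuper.isCompact_bregman_le hdw x
  have hcont := continuous_bregman hdw x
  obtain ⟨t, ht, htU⟩ := exists_pos_sublevel_subset hcont (hcompact 1) hU hsub
  set Ω := {z | bregman w x z < ρ * bregman v x z + (1 - ρ) * t} with hΩ
  have hΩ_sub : Ω ⊆ {z | bregman w x z ≤ t} := fun z hz => by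
    have h₁ := mul_le_mul_of_nonneg_left (bregman_le_bregman_of_touch hle htouch hgrad z) hρ₀.le
    have h₂ : (1 - ρ) * bregman w x z < (1 - ρ) * t := by
      linarith [show bregman w x z < ρ * bregman v x z + (1 - ρ) * t from hz]
    exact (lt_of_mul_lt_mul_left h₂ (by linarith)).le
  refine ⟨Ω, hΩ_sub.trans htU,
    isOpen_lt hcont (((continuous_bregman hdv x).const_mul ρ).add_const _), ?_,
    (hcompact t).isBounded.subset hΩ_sub, ?_⟩
  · simp only [hΩ, mem_ofPred_eq, bregman_self, mul_zero, zero_add]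
    exact mul_pos (sub_pos.2 hρ₁) ht
  · have himage : AffineMap.homothety (∇ w x) ρ '' (∇ v '' Ω) ⊆ ∇ w '' Ω := by
      rintro _ ⟨_, ⟨z₁, hz₁, rfl⟩, rfl⟩
      obtain ⟨z₂, hz₂, heq⟩ :=
        exists_gradient_eq_homothety hv hdv hdw hsuper hρ₀.le hw hgrad hz₁
      exact ⟨z₂, hz₂, heq⟩
    calc ENNReal.ofReal (ρ ^ Module.finrank ℝ E) * m (∇ v '' Ω)
        = m (AffineMap.homothety (∇ w x) ρ '' (∇ v '' Ω)) := by
          rw [Measure.addHaar_image_homothety, abs_of_nonneg (by positivity)]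
      _ ≤ m (∇ w '' Ω) := measure_mono himage

lemma setLIntegral_ofReal_lt_top_of_isBounded {m : Measure E} [IsFiniteMeasureOnCompacts m]
    {f : E → ℝ} (hf : Continuous f) {Ω : Set E} (hΩ : Bornology.IsBounded Ω) :
    ∫⁻ z in Ω, ENNReal.ofReal (f z) ∂m < ⊤ :=
  ((hf.continuousOn.integrableOn_compact hΩ.isCompact_closure).mono_set
    subset_closure).lintegral_lt_top

lemma measure_image_gradient_const_mul_add_const {φ : E → ℝ} (hd : Differentiable ℝ φ)
    (m : Measure E) [m.IsAddHaarMeasure] {a : ℝ} (ha : 0 ≤ a) (b : ℝ) (s : Set E) :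
    m (∇ (fun z => a * φ z + b) '' s)
      = ENNReal.ofReal (a ^ Module.finrank ℝ E) * m (∇ φ '' s) := by
  have himage : ∇ (fun z => a * φ z + b) '' s = (a • ·) '' (∇ φ '' s) := by
    rw [gradient_const_mul_add_const hd, image_image]
    rfl
  rw [himage, image_smul, Measure.addHaar_smul, abs_of_nonneg (by positivity)]

section Gibbs

variable {φ V W : E → ℝ} (hφ : ConvexOn ℝ univ φ) (hd : Differentiable ℝ φ)
  {m : Measure E} [m.IsAddHaarMeasure] (hV : Continuous V) (hW : Continuous W)
  (hmap : (gibbsMeasure m V).map (∇ φ) = gibbsMeasure m W)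

include hφ hd hV hW hmap

lemma exp_mul_lintegral_le_of_lt_symmAverage {k : E} {a s : ℝ}
    (hVk : ∀ x, symmAverage V k x ≤ V x + a) {Ω : Set E} (hΩ : MeasurableSet Ω)
    (hs : ∀ z ∈ Ω, s < symmAverage (fun x => W (∇ φ x)) k z - W (∇ φ z)) :
    ENNReal.ofReal (exp (s - a)) * ∫⁻ z in Ω, ENNReal.ofReal (exp (W (∇ φ z) - V z)) ∂m
      ≤ m (∇ (symmAverage φ k) '' Ω) := by
  rw [← lintegral_const_mul' _ _ ENNReal.ofReal_ne_top]
  refine (setLIntegral_mono' hΩ fun z hz => ?_).trans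
    (lintegral_le_measure_image_gradient_symmAverage hφ hd hV hW hmap k hΩ)
  rw [← ENNReal.ofReal_mul (exp_pos _).le, ← exp_add]
  refine ENNReal.ofReal_le_ofReal (exp_le_exp.2 ?_)
  have h₁ := hs z hz
  have h₂ := hVk z
  simp only [symmAverage, smul_eq_mul] at h₁ h₂ ⊢
  linarith

lemma pow_mul_exp_le_pow_of_touch (hsuper : Superlinear φ) {κ c a s ρ : ℝ} (hκ : 0 < 1 + κ)
    {k x : E} (hVk : ∀ x, symmAverage V k x ≤ V x + a)
    (hle : ∀ z, symmAverage φ k z ≤ (1 + κ) * φ z + c)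
    (htouch : symmAverage φ k x = (1 + κ) * φ x + c)
    (hs : s < symmAverage (fun x => W (∇ φ x)) k x - W (∇ φ x))
    (hρ₀ : 0 < ρ) (hρ₁ : ρ < 1) :
    ρ ^ Module.finrank ℝ E * exp (s - a) ≤ (1 + κ) ^ Module.finrank ℝ E := by
  have hgrad := continuous_gradient hφ hd
  have hopen : IsOpen {z | s < symmAverage (fun x => W (∇ φ x)) k z - W (∇ φ z)} := by
    refine isOpen_lt continuous_const ?_
    simp only [symmAverage]
    fun_prop
  obtain ⟨Ω, hΩs, hΩ, hx, hΩb, hvol⟩ := exists_isOpen_measure_image_gradient_le m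
    (convexOn_symmAverage hφ k) (differentiable_symmAverage hd k)
    ((hφ.smul hκ.le).add_const c) ((hd.const_mul _).add_const c)
    (hsuper.const_mul_add_const hκ c) hle htouch hopen
    (fun z hz => hs.trans_eq
      (symmAverage_sub_eq_of_bregman_nonpos hφ hd hκ hle htouch hz W).symm) hρ₀ hρ₁
  have hcont : Continuous fun z => exp (W (∇ φ z) - V z) := by fun_prop
  set I := ∫⁻ z in Ω, ENNReal.ofReal (exp (W (∇ φ z) - V z)) ∂m
  have hI_top : I ≠ ⊤ := (setLIntegral_ofReal_lt_top_of_isBounded hcont hΩb).ne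
  have hI_pos : I ≠ 0 :=
    (setLIntegral_ofReal_pos_of_isOpen hcont (fun _ => exp_pos _) hΩ ⟨x, hx⟩).ne'
  have hcompare : ENNReal.ofReal (ρ ^ Module.finrank ℝ E * exp (s - a)) * I
      ≤ ENNReal.ofReal ((1 + κ) ^ Module.finrank ℝ E) * I :=
    calc ENNReal.ofReal (ρ ^ Module.finrank ℝ E * exp (s - a)) * I
        ≤ ENNReal.ofReal (ρ ^ Module.finrank ℝ E) * m (∇ (symmAverage φ k) '' Ω) := by
          rw [ENNReal.ofReal_mul (by positivity), mul_assoc]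
          gcongr
          exact exp_mul_lintegral_le_of_lt_symmAverage hφ hd hV hW hmap hVk hΩ.measurableSet hΩs
      _ ≤ m (∇ (fun z => (1 + κ) * φ z + c) '' Ω) := hvol
      _ = ENNReal.ofReal ((1 + κ) ^ Module.finrank ℝ E) * m (∇ φ '' Ω) :=
          measure_image_gradient_const_mul_add_const hd m hκ.le c Ω
      _ ≤ ENNReal.ofReal ((1 + κ) ^ Module.finrank ℝ E) * I := by
          gcongr
          exact measure_image_gradient_le hφ hd hV hW hmap hΩ.measurableSet
  exact (ENNReal.ofReal_le_ofReal_iff (by positivity)).1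
    ((ENNReal.mul_le_mul_iff_left hI_pos hI_top).1 hcompare)

theorem symmAverage_comp_gradient_le_of_touch (hsuper : Superlinear φ) {κ c a : ℝ}
    (hκ : 0 < 1 + κ) {k x : E} (hVk : ∀ x, symmAverage V k x ≤ V x + a)
    (hle : ∀ z, symmAverage φ k z ≤ (1 + κ) * φ z + c)
    (htouch : symmAverage φ k x = (1 + κ) * φ x + c) :
    symmAverage (fun x => W (∇ φ x)) k x - W (∇ φ x) ≤
      a + Module.finrank ℝ E * log (1 + κ) := by
  set d := Module.finrank ℝ E
  refine le_of_forall_pos_le_add fun ε hε => ?_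
  set σ := ε / (d + 1) with hσ
  have hσ_pos : 0 < σ := by positivity
  have hpow := pow_mul_exp_le_pow_of_touch hφ hd hV hW hmap hsuper hκ hVk hle htouch
    (sub_lt_self _ hσ_pos) (exp_pos (-σ)) (exp_lt_one_iff.2 (neg_lt_zero.2 hσ_pos))
  have hlog := log_le_log (by positivity) hpow
  rw [log_mul (by positivity) (by positivity), log_pow, log_pow, log_exp, log_exp] at hlog
  have hε_eq : (d + 1) * σ = ε := by
    rw [hσ]
    field_simp
  linarith

end Gibbs

end Touching

section Growth

lemma denseRange_of_absolutelyContinuous_map {X Y : Type*} [MeasurableSpace X]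
    [TopologicalSpace Y] [MeasurableSpace Y] [OpensMeasurableSpace Y] {μ : Measure X}
    {m : Measure Y} [m.IsOpenPosMeasure] {T : X → Y} (hT : Measurable T) (h : m ≪ μ.map T) :
    DenseRange T := dense_iff_inter_open.2 fun U hU hne => by
  by_contra hempty
  have hpre : T ⁻¹' U = ∅ := eq_empty_of_forall_notMem fun x hx =>
    hempty ⟨T x, hx, mem_range_self x⟩
  refine (hU.measure_pos m hne).ne' (h ?_)
  rw [Measure.map_apply hT hU.measurableSet, hpre, measure_empty]

variable {E : Type*} [NormedAddCommGroup E] [InnerProductSpace ℝ E]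

lemma superlinear_of_denseRange_gradient [FiniteDimensional ℝ E] {φ : E → ℝ}
    (hφ : ConvexOn ℝ univ φ) (hd : Differentiable ℝ φ) (hdense : DenseRange (∇ φ)) :
    Superlinear φ := fun K => by
  obtain ⟨C, hC⟩ : ∃ C, ∀ u ∈ Metric.sphere (0 : E) 1, ∀ r : ℝ, 0 ≤ r →
      K * r - C ≤ φ (r • u) := by
    refine (isCompact_sphere (0 : E) 1).induction_on
      (p := fun s => ∃ C, ∀ u ∈ s, ∀ r : ℝ, 0 ≤ r → K * r - C ≤ φ (r • u)) ⟨0, by simp⟩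
      (fun s t hst ⟨C, hC⟩ => ⟨C, fun u hu => hC u (hst hu)⟩) ?_ fun u hu => ?_
    · rintro s t ⟨C₁, h₁⟩ ⟨C₂, h₂⟩
      refine ⟨max C₁ C₂, fun u hu r hr => ?_⟩
      rcases hu with hu | hu
      · exact (sub_le_sub_left (le_max_left _ _) _).trans (h₁ u hu r hr)
      · exact (sub_le_sub_left (le_max_right _ _) _).trans (h₂ u hu r hr)
    · obtain ⟨c, hc⟩ := hdense.exists_dist_lt ((K + 1) • u) one_pos
      have hKu : K < ⟪∇ φ c, u⟫ := by
        rw [mem_sphere_zero_iff_norm] at hu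
        have hcs := real_inner_le_norm ((K + 1) • u - ∇ φ c) u
        rw [inner_sub_left, inner_smul_left, real_inner_self_eq_norm_sq, hu, ← dist_eq_norm,
          conj_trivial] at hcs
        linarith
      refine ⟨{v | K < ⟪∇ φ c, v⟫}, mem_nhdsWithin_of_mem_nhds
        ((isOpen_lt continuous_const (by fun_prop)).mem_nhds hKu), ⟪∇ φ c, c⟫ - φ c,
        fun v (hv : K < ⟪∇ φ c, v⟫) r hr => ?_⟩
      have hminor := add_inner_gradient_le hφ (hd c) (r • v)
      rw [inner_sub_right, inner_smul_right] at hminor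
      nlinarith
  refine ⟨max C (-φ 0), fun x => ?_⟩
  rcases eq_or_ne x 0 with rfl | hx
  · rw [norm_zero, mul_zero, zero_sub]
    exact neg_le.2 (le_max_right _ _)
  · have hx_norm : ‖x‖ ≠ 0 := norm_ne_zero_iff.2 hx
    have := hC (‖x‖⁻¹ • x) (by simp [norm_smul, hx_norm]) ‖x‖ (norm_nonneg x)
    rw [smul_inv_smul₀ hx_norm] at this
    exact (sub_le_sub_left (le_max_left _ _) _).trans this

lemma exists_ball_subset_preimage_of_monotone {T : E → E}
    (hT : ∀ x z, 0 ≤ ⟪T x - T z, x - z⟫) (x : E) :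
    ∃ e : E, ‖e‖ ≤ 1 ∧ Metric.ball (x + (2 : ℝ) • e) 1 ⊆ T ⁻¹' {y | ‖T x‖ / 3 ≤ ‖y‖} := by
  set R := ‖T x‖ with hR
  set e := R⁻¹ • T x with he
  have he_norm : ‖e‖ ≤ 1 := by
    rw [he, norm_smul, norm_inv, hR, norm_norm]
    exact inv_mul_le_one
  have hTe : ⟪T x, e⟫ = R := by
    rw [he, inner_smul_right, real_inner_self_eq_norm_sq, ← hR, sq, ← mul_assoc,
      inv_mul_mul_self]
  refine ⟨e, he_norm, fun z hz => ?_⟩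
  set w := z - (x + (2 : ℝ) • e) with hw
  have hw_norm : ‖w‖ < 1 := by rwa [Metric.mem_ball, dist_eq_norm] at hz
  have hzx : z - x = (2 : ℝ) • e + w := by
    rw [hw]
    abel
  have hzx_norm : ‖z - x‖ ≤ 3 := by
    rw [hzx]
    refine (norm_add_le _ _).trans ?_
    rw [norm_smul, Real.norm_of_nonneg zero_le_two]
    linarith
  have hmono := hT z x
  have hcs₁ := real_inner_le_norm (T z) (z - x)
  have hcs₂ := neg_le_of_abs_le (abs_real_inner_le_norm (T x) w)
  rw [inner_sub_left, hzx, inner_add_right (T x), inner_smul_right, hTe, ← hzx] at hmono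
  have : R / 3 ≤ ‖T z‖ := by nlinarith [norm_nonneg (T x), norm_nonneg (T z)]
  exact this

variable [MeasurableSpace E] [BorelSpace E]

lemma exists_linear_bound_of_monotone {T : E → E} (hT : ∀ x z, 0 ≤ ⟪T x - T z, x - z⟫)
    (hmeas : Measurable T) {μ : Measure E} {A B b : ℝ} (hA : 0 ≤ A) (hb : 0 < b)
    (hball : ∀ x, ENNReal.ofReal (exp (-(A * (1 + ‖x‖) ^ 2))) ≤ μ (Metric.ball x 1))
    (htail : ∀ R, 0 ≤ R → μ.map T {y | R ≤ ‖y‖} ≤ ENNReal.ofReal (exp (B - b * R ^ 2))) :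
    ∃ C, 0 ≤ C ∧ ∀ x, ‖T x‖ ≤ C * (1 + ‖x‖) := by
  refine ⟨√(9 / b * (9 * A + |B|)), sqrt_nonneg _, fun x => ?_⟩
  obtain ⟨e, he, hsub⟩ := exists_ball_subset_preimage_of_monotone hT x
  have hx := norm_nonneg x
  have hmass : ENNReal.ofReal (exp (-(A * (1 + ‖x + (2 : ℝ) • e‖) ^ 2))) ≤
      ENNReal.ofReal (exp (B - b * (‖T x‖ / 3) ^ 2)) :=
    calc ENNReal.ofReal (exp (-(A * (1 + ‖x + (2 : ℝ) • e‖) ^ 2)))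
        ≤ μ (T ⁻¹' {y | ‖T x‖ / 3 ≤ ‖y‖}) := (hball _).trans (measure_mono hsub)
      _ = μ.map T {y | ‖T x‖ / 3 ≤ ‖y‖} :=
          (Measure.map_apply hmeas (measurableSet_le measurable_const measurable_norm)).symm
      _ ≤ ENNReal.ofReal (exp (B - b * (‖T x‖ / 3) ^ 2)) := htail _ (by positivity)
  rw [ENNReal.ofReal_le_ofReal_iff (exp_pos _).le, exp_le_exp] at hmass
  have hcenter : 1 + ‖x + (2 : ℝ) • e‖ ≤ 3 * (1 + ‖x‖) := by
    have := norm_add_le x ((2 : ℝ) • e)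
    rw [norm_smul, Real.norm_of_nonneg zero_le_two] at this
    linarith
  have hA_center : A * (1 + ‖x + (2 : ℝ) • e‖) ^ 2 ≤ A * (3 * (1 + ‖x‖)) ^ 2 := by gcongr
  have hB : B ≤ |B| * (1 + ‖x‖) ^ 2 :=
    (le_abs_self B).trans (le_mul_of_one_le_right (abs_nonneg B) (by nlinarith))
  refine le_of_sq_le_sq ?_ (by positivity)
  rw [mul_pow, sq_sqrt (by positivity)]
  have hsq : b / 9 * ‖T x‖ ^ 2 ≤ (9 * A + |B|) * (1 + ‖x‖) ^ 2 := by linarith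
  calc ‖T x‖ ^ 2 = 9 / b * (b / 9 * ‖T x‖ ^ 2) := by field_simp
    _ ≤ 9 / b * ((9 * A + |B|) * (1 + ‖x‖) ^ 2) := by gcongr
    _ = 9 / b * (9 * A + |B|) * (1 + ‖x‖) ^ 2 := by ring

variable [FiniteDimensional ℝ E]

lemma exists_le_gibbsMeasure_ball (m : Measure E) [m.IsAddHaarMeasure] {V : E → ℝ} {A : ℝ}
    (hA : 0 ≤ A) (hV : ∀ x, V x ≤ A * (1 + ‖x‖) ^ 2) :
    ∃ A', 0 ≤ A' ∧ ∀ x, ENNReal.ofReal (exp (-(A' * (1 + ‖x‖) ^ 2))) ≤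
      gibbsMeasure m V (Metric.ball x 1) := by
  set c := m.real (Metric.ball (0 : E) 1) with hc
  have hc_pos : 0 < c := ENNReal.toReal_pos (Metric.measure_ball_pos m 0 one_pos).ne'
    measure_ball_lt_top.ne
  refine ⟨4 * A + |log c|, by positivity, fun x => ?_⟩
  have hx := norm_nonneg x
  have hV_ball : ∀ z ∈ Metric.ball x 1, V z ≤ 4 * A * (1 + ‖x‖) ^ 2 := fun z hz => by
    have hzx : ‖z‖ ≤ 1 + ‖x‖ := by
      have := norm_sub_norm_le z x
      rw [Metric.mem_ball, dist_eq_norm] at hz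
      linarith
    calc V z ≤ A * (1 + ‖z‖) ^ 2 := hV z
      _ ≤ A * (2 * (1 + ‖x‖)) ^ 2 := by gcongr; linarith
      _ = 4 * A * (1 + ‖x‖) ^ 2 := by ring
  have hlog : -|log c| * (1 + ‖x‖) ^ 2 ≤ log c := by
    have : |log c| ≤ |log c| * (1 + ‖x‖) ^ 2 :=
      le_mul_of_one_le_right (abs_nonneg _) (by nlinarith)
    linarith [neg_abs_le (log c)]
  calc ENNReal.ofReal (exp (-((4 * A + |log c|) * (1 + ‖x‖) ^ 2)))
      ≤ ENNReal.ofReal (exp (-(4 * A * (1 + ‖x‖) ^ 2)) * exp (log c)) := by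
        rw [← exp_add]
        gcongr
        linarith
    _ = ∫⁻ _ in Metric.ball x 1, ENNReal.ofReal (exp (-(4 * A * (1 + ‖x‖) ^ 2))) ∂m := by
        rw [exp_log hc_pos, ENNReal.ofReal_mul (exp_pos _).le, setLIntegral_const,
          Measure.addHaar_ball_center, hc, ofReal_measureReal measure_ball_lt_top.ne]
    _ ≤ gibbsMeasure m V (Metric.ball x 1) := by
        rw [gibbsMeasure, withDensity_apply _ Metric.isOpen_ball.measurableSet]
        refine setLIntegral_mono' Metric.isOpen_ball.measurableSet fun z hz => ?_
        gcongr
        exact hV_ball z hz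

lemma lintegral_exp_neg_mul_sq_norm_lt_top {b : ℝ} (hb : 0 < b) :
    ∫⁻ y : E, ENNReal.ofReal (exp (-b * ‖y‖ ^ 2)) < ⊤ := by
  have := GaussianFourier.integrable_cexp_neg_mul_sq_norm_add (V := E) (b := b) (by simpa) 0 0
  refine Integrable.lintegral_lt_top (this.norm.congr (Eventually.of_forall fun y => ?_))
  simp [Complex.norm_exp, ← Complex.ofReal_pow]

lemma exists_gibbsMeasure_tail_le {W : E → ℝ} {b c : ℝ} (hb : 0 < b)
    (hW : ∀ y, b * ‖y‖ ^ 2 - c ≤ W y) :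
    ∃ B, ∀ R, 0 ≤ R → gibbsMeasure volume W {y | R ≤ ‖y‖} ≤
      ENNReal.ofReal (exp (B - b / 2 * R ^ 2)) := by
  set I := ∫⁻ y : E, ENNReal.ofReal (exp (-(b / 2) * ‖y‖ ^ 2))
  have hI_top : I ≠ ⊤ := (lintegral_exp_neg_mul_sq_norm_lt_top (half_pos hb)).ne
  have hI_le : I ≤ ENNReal.ofReal (exp I.toReal) := by
    rw [ENNReal.le_ofReal_iff_toReal_le hI_top (exp_pos _).le]
    linarith [add_one_le_exp I.toReal]
  refine ⟨c + I.toReal, fun R hR => ?_⟩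
  have hmeas : MeasurableSet {y : E | R ≤ ‖y‖} := measurableSet_le measurable_const measurable_norm
  calc gibbsMeasure volume W {y | R ≤ ‖y‖}
      ≤ ∫⁻ y in {y : E | R ≤ ‖y‖}, ENNReal.ofReal (exp (c - b / 2 * R ^ 2)) *
          ENNReal.ofReal (exp (-(b / 2) * ‖y‖ ^ 2)) := by
        rw [gibbsMeasure, withDensity_apply _ hmeas]
        refine setLIntegral_mono' hmeas fun y (hy : R ≤ ‖y‖) => ?_
        rw [← ENNReal.ofReal_mul (exp_pos _).le, ← exp_add]
        gcongr
        have : R ^ 2 ≤ ‖y‖ ^ 2 := by gcongr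
        nlinarith [hW y]
    _ ≤ ENNReal.ofReal (exp (c - b / 2 * R ^ 2)) * I := by
        rw [lintegral_const_mul' _ _ ENNReal.ofReal_ne_top]
        gcongr
        exact setLIntegral_le_lintegral _ _
    _ ≤ ENNReal.ofReal (exp (c - b / 2 * R ^ 2)) * ENNReal.ofReal (exp I.toReal) := by gcongr
    _ = ENNReal.ofReal (exp (c + I.toReal - b / 2 * R ^ 2)) := by
        rw [← ENNReal.ofReal_mul (exp_pos _).le, ← exp_add]
        ring_nf

end Growth

section StrongConvexity

lemma sub_apply_one_add_smul_le_of_convexOn {F : Type*} [AddCommGroup F] [Module ℝ F]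
    {W : F → ℝ} {c : ℝ} (hW : ConvexOn ℝ univ W) (hc : ∀ y, c ≤ W y) {κ : ℝ} (hκ : 0 ≤ κ)
    (y : F) : W y - W ((1 + κ) • y) ≤ κ * (W 0 - c) := by
  have hκ₁ : 0 < 1 + κ := by positivity
  have h := hW.2 (mem_univ ((1 + κ) • y)) (mem_univ 0) (by positivity : 0 ≤ 1 / (1 + κ))
    (by positivity : 0 ≤ κ / (1 + κ)) (by field_simp)
  rw [smul_zero, add_zero, smul_smul, one_div_mul_cancel hκ₁.ne', one_smul, smul_eq_mul,
    smul_eq_mul, div_mul_eq_mul_div, div_mul_eq_mul_div, ← add_div, le_div_iff₀ hκ₁] at h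
  nlinarith [hc y]

variable {E : Type*} [NormedAddCommGroup E]

lemma exists_neg_mul_le_of_convexOn [NormedSpace ℝ E] [FiniteDimensional ℝ E] {f : E → ℝ}
    (hf : ConvexOn ℝ univ f) : ∃ C, 0 ≤ C ∧ ∀ y, -(C * (1 + ‖y‖)) ≤ f y := by
  obtain ⟨M, hM⟩ := (isCompact_closedBall (0 : E) 1).exists_bound_of_continuousOn
    ((hf.continuousOn isOpen_univ).mono (subset_univ _))
  have hM₀ : |f 0| ≤ M := hM 0 (by simp)
  have hM_nonneg : 0 ≤ M := (abs_nonneg _).trans hM₀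
  refine ⟨2 * M, by positivity, fun y => ?_⟩
  -- `0` lies on the segment between `y` and the opposite unit vector.
  set r := ‖y‖ with hr
  have hr₀ : 0 ≤ r := norm_nonneg y
  have hu : |f (-(r⁻¹ • y))| ≤ M := hM _ <| by
    rw [mem_closedBall_zero_iff, norm_neg, norm_smul, norm_inv, hr, norm_norm]
    exact inv_mul_le_one
  have hconv := hf.2 (mem_univ y) (mem_univ (-(r⁻¹ • y))) (by positivity : 0 ≤ 1 / (1 + r))
    (by positivity : 0 ≤ r / (1 + r)) (by field_simp)
  have hzero : (1 / (1 + r)) • y + (r / (1 + r)) • -(r⁻¹ • y) = 0 := by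
    rcases eq_or_ne y 0 with rfl | hy
    · simp
    · have : r ≠ 0 := norm_ne_zero_iff.2 hy
      rw [smul_neg, smul_smul, show r / (1 + r) * r⁻¹ = 1 / (1 + r) by field_simp,
        add_neg_cancel]
  rw [hzero, smul_eq_mul, smul_eq_mul, div_mul_eq_mul_div, div_mul_eq_mul_div, ← add_div,
    le_div_iff₀ (by positivity)] at hconv
  nlinarith [neg_le_of_abs_le hM₀, le_of_abs_le hu]

variable [InnerProductSpace ℝ E]

section Quadratic

variable [FiniteDimensional ℝ E]

lemma continuous_of_strongConvexOn {W : E → ℝ} {β : ℝ} (hW : StrongConvexOn univ β W) :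
    Continuous W := by
  have h := (strongConvexOn_iff_convex.1 hW).continuousOn isOpen_univ
  rw [continuousOn_univ] at h
  exact (h.add (by fun_prop : Continuous fun x : E => β / 2 * ‖x‖ ^ 2)).congr fun x =>
    sub_add_cancel _ _

lemma continuous_of_strongConcaveOn {V : E → ℝ} {α : ℝ} (hV : StrongConcaveOn univ α V) :
    Continuous V :=
  continuous_neg_iff.1 (continuous_of_strongConvexOn (UniformConcaveOn.neg hV))

lemma exists_sq_norm_sub_le_of_strongConvexOn {W : E → ℝ} {β : ℝ} (hβ : 0 < β)
    (hW : StrongConvexOn univ β W) : ∃ c, ∀ y, β / 4 * ‖y‖ ^ 2 - c ≤ W y := by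
  obtain ⟨C, -, hC⟩ := exists_neg_mul_le_of_convexOn (strongConvexOn_iff_convex.1 hW)
  refine ⟨C + C ^ 2 / β, fun y => ?_⟩
  have hamgm : C * ‖y‖ ≤ β / 4 * ‖y‖ ^ 2 + C ^ 2 / β := by
    have : β / 4 * ‖y‖ ^ 2 + C ^ 2 / β - C * ‖y‖ = (β * ‖y‖ - 2 * C) ^ 2 / (4 * β) := by
      field_simp
      ring
    linarith [show 0 ≤ (β * ‖y‖ - 2 * C) ^ 2 / (4 * β) by positivity]
  linarith [hC y]

lemma exists_le_mul_sq_of_strongConcaveOn {V : E → ℝ} {α : ℝ} (hα : 0 ≤ α)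
    (hV : StrongConcaveOn univ (-α) V) : ∃ A, 0 ≤ A ∧ ∀ x, V x ≤ A * (1 + ‖x‖) ^ 2 := by
  obtain ⟨C, hC₀, hC⟩ := exists_neg_mul_le_of_convexOn (strongConcaveOn_iff_convex.1 hV).neg
  refine ⟨α / 2 + C, by positivity, fun x => ?_⟩
  have := hC x
  simp only [Pi.neg_apply] at this
  nlinarith [norm_nonneg x, mul_nonneg hα (norm_nonneg x), mul_nonneg hC₀ (norm_nonneg x),
    mul_nonneg hC₀ (sq_nonneg ‖x‖)]

end Quadratic

lemma midpoint_le_of_strongConvexOn {W : E → ℝ} {β : ℝ} (hW : StrongConvexOn univ β W)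
    (a b : E) : W ((1 / 2 : ℝ) • (a + b)) + β / 8 * ‖a - b‖ ^ 2 ≤ (W a + W b) / 2 := by
  have h := hW.2 (mem_univ a) (mem_univ b) (by norm_num : (0 : ℝ) ≤ 1 / 2)
    (by norm_num : (0 : ℝ) ≤ 1 / 2) (by norm_num)
  rw [← smul_add, smul_eq_mul, smul_eq_mul] at h
  linarith

lemma symmAverage_le_of_strongConcaveOn {V : E → ℝ} {α : ℝ} (hV : StrongConcaveOn univ (-α) V)
    (k x : E) : symmAverage V k x ≤ V x + α / 2 * ‖k‖ ^ 2 := by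
  have h := hV.2 (mem_univ (x + k)) (mem_univ (x - k)) (by norm_num : (0 : ℝ) ≤ 1 / 2)
    (by norm_num : (0 : ℝ) ≤ 1 / 2) (by norm_num)
  have hmid : (1 / 2 : ℝ) • (x + k) + (1 / 2 : ℝ) • (x - k) = x := by module
  have hdiff : ‖x + k - (x - k)‖ = 2 * ‖k‖ := by
    rw [show x + k - (x - k) = (2 : ℝ) • k by module, norm_smul, Real.norm_of_nonneg zero_le_two]
  rw [hmid, hdiff, ← smul_add] at h
  rw [symmAverage]
  linarith

end StrongConvexity

section MaximumPrinciple

variable {E : Type*} [NormedAddCommGroup E] [InnerProductSpace ℝ E]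

/-- The function of a point `x` and an increment `k` to which the maximum principle is applied.
Its supremum is at most `0` for `κ = 0` exactly when `∇ φ` is `L`-Lipschitz (`φ` convex); the term
`-κ φ x` makes the supremum over bounded increments attained. -/
noncomputable def penalizedDifference (φ : E → ℝ) (L κ : ℝ) (x k : E) : ℝ :=
  symmAverage φ k x - (1 + κ) * φ x - L / 2 * ‖k‖ ^ 2

section Complete

variable [CompleteSpace E] {φ : E → ℝ}

lemma symmAverage_sub_le_inner_gradient_sub (hφ : ConvexOn ℝ univ φ) (hd : Differentiable ℝ φ)
    (x k : E) : symmAverage φ k x - φ x ≤ ⟪∇ φ (x + k) - ∇ φ (x - k), k⟫ / 2 := by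
  have h₁ := add_inner_gradient_le hφ (hd (x + k)) x
  have h₂ := add_inner_gradient_le hφ (hd (x - k)) x
  rw [sub_add_cancel_left, inner_neg_right] at h₁
  rw [sub_sub_cancel] at h₂
  rw [symmAverage, inner_sub_left, smul_eq_mul]
  linarith

lemma symmAverage_sub_le_of_norm_gradient_le (hφ : ConvexOn ℝ univ φ)
    (hd : Differentiable ℝ φ) {C : ℝ} (hC : 0 ≤ C) (hgrowth : ∀ x, ‖∇ φ x‖ ≤ C * (1 + ‖x‖))
    (x k : E) : symmAverage φ k x - φ x ≤ C * (1 + ‖x‖ + ‖k‖) * ‖k‖ := by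
  have h₁ : ‖∇ φ (x + k)‖ ≤ C * (1 + ‖x‖ + ‖k‖) :=
    (hgrowth _).trans (by rw [add_assoc]; gcongr; exact norm_add_le x k)
  have h₂ : ‖∇ φ (x - k)‖ ≤ C * (1 + ‖x‖ + ‖k‖) :=
    (hgrowth _).trans (by rw [add_assoc]; gcongr; exact norm_sub_le x k)
  calc symmAverage φ k x - φ x ≤ ⟪∇ φ (x + k) - ∇ φ (x - k), k⟫ / 2 :=
        symmAverage_sub_le_inner_gradient_sub hφ hd x k
    _ ≤ (‖∇ φ (x + k)‖ + ‖∇ φ (x - k)‖) * ‖k‖ / 2 := by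
        gcongr
        exact (real_inner_le_norm _ _).trans (by gcongr; exact norm_sub_le _ _)
    _ ≤ (C * (1 + ‖x‖ + ‖k‖) + C * (1 + ‖x‖ + ‖k‖)) * ‖k‖ / 2 := by gcongr
    _ = C * (1 + ‖x‖ + ‖k‖) * ‖k‖ := by ring

lemma penalizedDifference_le_of_superlinear (hφ : ConvexOn ℝ univ φ) (hd : Differentiable ℝ φ)
    (hsuper : Superlinear φ) {C L κ : ℝ} (hC : 0 ≤ C) (hgrowth : ∀ x, ‖∇ φ x‖ ≤ C * (1 + ‖x‖))
    (hL : 0 ≤ L) (hκ : 0 < κ) (H : ℝ) :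
    ∃ R, ∀ x k, ‖k‖ ≤ H → penalizedDifference φ L κ x k ≤ R - ‖x‖ := by
  obtain ⟨c, hc⟩ := hsuper ((C * H + 1) / κ)
  refine ⟨C * (1 + H) * H + κ * c, fun x k hk => ?_⟩
  have hH : 0 ≤ H := (norm_nonneg k).trans hk
  have hdiff : symmAverage φ k x - φ x ≤ C * (1 + ‖x‖ + H) * H :=
    (symmAverage_sub_le_of_norm_gradient_le hφ hd hC hgrowth x k).trans (by gcongr)
  have hpenalty : (C * H + 1) * ‖x‖ - κ * c ≤ κ * φ x :=
    calc (C * H + 1) * ‖x‖ - κ * c = κ * ((C * H + 1) / κ * ‖x‖ - c) := by field_simp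
      _ ≤ κ * φ x := by gcongr; exact hc x
  have hsq : 0 ≤ L / 2 * ‖k‖ ^ 2 := by positivity
  rw [penalizedDifference]
  linarith

lemma mul_sq_norm_le_inner_gradient_sub_of_max (hd : Differentiable ℝ φ) {L κ : ℝ} {x k : E}
    (hmax : ∀ j, ‖j‖ ≤ ‖k‖ → penalizedDifference φ L κ x j ≤ penalizedDifference φ L κ x k) :
    2 * L * ‖k‖ ^ 2 ≤ ⟪∇ φ (x + k) - ∇ φ (x - k), k⟫ := by
  set f : ℝ → ℝ := fun s => penalizedDifference φ L κ x (s • k) with hf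
  have hf_eq : f = fun s => 1 / 2 * (φ (x + s • k) + φ (x + s • -k)) - (1 + κ) * φ x -
      L / 2 * (s ^ 2 * ‖k‖ ^ 2) := by
    ext s
    simp only [hf, penalizedDifference, symmAverage, smul_eq_mul, norm_smul, mul_pow,
      Real.norm_eq_abs, sq_abs, smul_neg, ← sub_eq_add_neg]
  have hderiv : HasDerivAt f (1 / 2 * (⟪∇ φ (x + (1 : ℝ) • k), k⟫ +
      ⟪∇ φ (x + (1 : ℝ) • -k), -k⟫) - L / 2 * ((2 * 1) * ‖k‖ ^ 2)) 1 := by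
    rw [hf_eq]
    refine ((((hasDerivAt_comp_line (hd _)).add (hasDerivAt_comp_line (hd _))).const_mul
      (1 / 2)).sub_const _).sub (HasDerivAt.const_mul _ (HasDerivAt.mul_const ?_ _))
    simpa using hasDerivAt_pow 2 (1 : ℝ)
  have hlocal : IsLocalMaxOn f (Icc 0 1) 1 := IsMaxOn.localize fun s hs => by
    refine (hmax (s • k) ?_).trans_eq (by simp only [hf, one_smul])
    rw [norm_smul, Real.norm_of_nonneg hs.1]
    exact mul_le_of_le_one_left (norm_nonneg k) hs.2
  have hnonpos := hlocal.hasFDerivWithinAt_nonpos hderiv.hasFDerivAt.hasFDerivWithinAt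
    (sub_mem_posTangentConeAt_of_segment_subset
      ((convex_Icc (0 : ℝ) 1).segment_subset (by simp) (by simp : (0 : ℝ) ∈ Icc (0 : ℝ) 1)))
  simp only [zero_sub, ContinuousLinearMap.toSpanSingleton_apply, smul_eq_mul, one_smul,
    inner_neg_right, ← sub_eq_add_neg] at hnonpos
  rw [inner_sub_left]
  linarith

end Complete

variable [FiniteDimensional ℝ E] {φ : E → ℝ}

lemma exists_max_penalizedDifference (hφ : ConvexOn ℝ univ φ) (hd : Differentiable ℝ φ)
    (hsuper : Superlinear φ) {C L κ : ℝ} (hC : 0 ≤ C) (hgrowth : ∀ x, ‖∇ φ x‖ ≤ C * (1 + ‖x‖))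
    (hL : 0 ≤ L) (hκ : 0 < κ) {H : ℝ} (hH : 0 ≤ H) :
    ∃ x k, ‖k‖ ≤ H ∧ ∀ z j, ‖j‖ ≤ H →
      penalizedDifference φ L κ z j ≤ penalizedDifference φ L κ x k := by
  obtain ⟨R, hR⟩ := penalizedDifference_le_of_superlinear hφ hd hsuper hC hgrowth hL hκ H
  set r := R - penalizedDifference φ L κ 0 0
  have hr₀ : 0 ≤ r := by
    have := hR 0 0 (by simpa)
    rw [norm_zero] at this
    linarith
  have hcont : Continuous fun q : E × E => penalizedDifference φ L κ q.1 q.2 := by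
    have := hd.continuous
    unfold penalizedDifference symmAverage
    fun_prop
  have hzero : (0, 0) ∈ Metric.closedBall (0 : E) r ×ˢ Metric.closedBall (0 : E) H := by
    simp [hr₀, hH]
  obtain ⟨⟨x, k⟩, hxk, hmax⟩ := ((isCompact_closedBall (0 : E) r).prod
    (isCompact_closedBall (0 : E) H)).exists_isMaxOn ⟨_, hzero⟩ hcont.continuousOn
  refine ⟨x, k, mem_closedBall_zero_iff.1 hxk.2, fun z j hj => ?_⟩
  rcases le_or_gt ‖z‖ r with hz | hz
  · exact hmax (a := (z, j)) ⟨mem_closedBall_zero_iff.2 hz, mem_closedBall_zero_iff.2 hj⟩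
  · have := hR z j hj
    exact (by linarith : _ ≤ penalizedDifference φ L κ 0 0).trans (hmax hzero)

variable [MeasurableSpace E] [BorelSpace E] {V W : E → ℝ} {α β : ℝ}

lemma sq_norm_gradient_sub_le_of_touch {m : Measure E} [m.IsAddHaarMeasure]
    (hφ : ConvexOn ℝ univ φ) (hd : Differentiable ℝ φ) (hβ : 0 ≤ β)
    (hV : StrongConcaveOn univ (-α) V) (hW : StrongConvexOn univ β W)
    (hmap : (gibbsMeasure m V).map (∇ φ) = gibbsMeasure m W)
    (hsuper : Superlinear φ) {w κ c : ℝ} (hw : ∀ y, w ≤ W y) (hκ : 0 ≤ κ) {x k : E}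
    (hle : ∀ z, symmAverage φ k z ≤ (1 + κ) * φ z + c)
    (htouch : symmAverage φ k x = (1 + κ) * φ x + c) :
    β / 8 * ‖∇ φ (x + k) - ∇ φ (x - k)‖ ^ 2 ≤
      α / 2 * ‖k‖ ^ 2 + κ * (Module.finrank ℝ E + (W 0 - w)) := by
  have hgrad : (1 + κ) • ∇ φ x = (1 / 2 : ℝ) • (∇ φ (x + k) + ∇ φ (x - k)) := by
    have := gradient_eq_of_touch (convexOn_symmAverage hφ k) (differentiable_symmAverage hd k x)
      ((hd x).const_mul (1 + κ) |>.add_const c) hle htouch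
    rwa [gradient_const_mul_add_const hd, gradient_symmAverage hd] at this
  have hmid := midpoint_le_of_strongConvexOn hW (∇ φ (x + k)) (∇ φ (x - k))
  rw [← hgrad] at hmid
  have hscale := sub_apply_one_add_smul_le_of_convexOn
    (hW.convexOn fun _ => by positivity) hw hκ (∇ φ x)
  have htransport := symmAverage_comp_gradient_le_of_touch hφ hd (continuous_of_strongConcaveOn hV)
    (continuous_of_strongConvexOn hW) hmap hsuper (by positivity)
    (symmAverage_le_of_strongConcaveOn hV k) hle htouch
  have hlog : Module.finrank ℝ E * log (1 + κ) ≤ Module.finrank ℝ E * κ := by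
    gcongr
    linarith [log_le_sub_one_of_pos (by positivity : 0 < 1 + κ)]
  rw [symmAverage, smul_eq_mul] at htransport
  linarith

lemma two_mul_mul_le_sq {L P Y t : ℝ} (hL : 0 < L) (hY : 0 ≤ Y) (hP : 2 * L * t ^ 2 ≤ P)
    (hPY : P ≤ Y * t) : 2 * L * P ≤ Y ^ 2 := by
  rcases le_or_gt t 0 with ht | ht
  · nlinarith [mul_nonneg hY (neg_nonneg.2 ht), sq_nonneg Y]
  · have : 2 * L * t ≤ Y := le_of_mul_le_mul_right (by linarith) ht
    nlinarith

lemma mul_inner_gradient_sub_le_of_max {m : Measure E} [m.IsAddHaarMeasure]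
    (hφ : ConvexOn ℝ univ φ) (hd : Differentiable ℝ φ) (hα : 0 ≤ α) (hβ : 0 ≤ β)
    (hV : StrongConcaveOn univ (-α) V) (hW : StrongConvexOn univ β W)
    (hmap : (gibbsMeasure m V).map (∇ φ) = gibbsMeasure m W) (hsuper : Superlinear φ)
    {w L κ : ℝ} (hw : ∀ y, w ≤ W y) (hL : 0 < L) (hκ : 0 ≤ κ) {x k : E}
    (hmax : ∀ z j, ‖j‖ ≤ ‖k‖ → penalizedDifference φ L κ z j ≤ penalizedDifference φ L κ x k) :
    (β * L ^ 2 - α) * ⟪∇ φ (x + k) - ∇ φ (x - k), k⟫ ≤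
      4 * L * (κ * (Module.finrank ℝ E + (W 0 - w))) := by
  have hfirst := mul_sq_norm_le_inner_gradient_sub_of_max hd (hmax x)
  have hsq := two_mul_mul_le_sq hL (norm_nonneg _) hfirst (real_inner_le_norm _ _)
  have hsecond := sq_norm_gradient_sub_le_of_touch hφ hd hβ hV hW hmap hsuper hw hκ
    (x := x) (k := k) (c := symmAverage φ k x - (1 + κ) * φ x) (fun z => by
      have := hmax z k le_rfl
      rw [penalizedDifference, penalizedDifference] at this
      linarith) (by ring)
  have hβ_mul := mul_le_mul_of_nonneg_left hsq hβ
  have hα_mul := mul_le_mul_of_nonneg_left hfirst hα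
  have hL_mul := mul_le_mul_of_nonneg_left hsecond hL.le
  nlinarith

lemma exists_penalizedDifference_le {m : Measure E} [m.IsAddHaarMeasure]
    (hφ : ConvexOn ℝ univ φ) (hd : Differentiable ℝ φ)
    (hα : 0 ≤ α) (hβ : 0 < β) (hV : StrongConcaveOn univ (-α) V) (hW : StrongConvexOn univ β W)
    (hmap : (gibbsMeasure m V).map (∇ φ) = gibbsMeasure m W)
    (hsuper : Superlinear φ) {C L : ℝ} (hC : 0 ≤ C) (hgrowth : ∀ x, ‖∇ φ x‖ ≤ C * (1 + ‖x‖))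
    (hL : 0 < L) (hαL : α < β * L ^ 2) :
    ∃ K, ∀ κ, 0 < κ → ∀ x k, penalizedDifference φ L κ x k ≤ κ * K := by
  obtain ⟨c, hc⟩ := hsuper 0
  obtain ⟨w, hw⟩ : ∃ w, ∀ y, w ≤ W y := by
    obtain ⟨b, hb⟩ := exists_sq_norm_sub_le_of_strongConvexOn hβ hW
    exact ⟨-b, fun y => by linarith [hb y, show 0 ≤ β / 4 * ‖y‖ ^ 2 by positivity]⟩
  refine ⟨2 * L * (Module.finrank ℝ E + (W 0 - w)) / (β * L ^ 2 - α) + c, fun κ hκ y j => ?_⟩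
  obtain ⟨x, k, hk, hmax⟩ := exists_max_penalizedDifference hφ hd hsuper hC hgrowth hL.le hκ
    (norm_nonneg j)
  have hinner := mul_inner_gradient_sub_le_of_max hφ hd hα hβ.le hV hW hmap hsuper hw hL hκ.le
    fun z i hi => hmax z i (hi.trans hk)
  rw [mul_comm, ← le_div_iff₀ (sub_pos.2 hαL)] at hinner
  have hφx : κ * -c ≤ κ * φ x := by
    gcongr
    linarith [hc x]
  calc penalizedDifference φ L κ y j ≤ penalizedDifference φ L κ x k := hmax y j le_rfl
    _ ≤ ⟪∇ φ (x + k) - ∇ φ (x - k), k⟫ / 2 + κ * c := by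
        have := symmAverage_sub_le_inner_gradient_sub hφ hd x k
        have : 0 ≤ L / 2 * ‖k‖ ^ 2 := by positivity
        rw [penalizedDifference]
        linarith
    _ ≤ 4 * L * (κ * (Module.finrank ℝ E + (W 0 - w))) / (β * L ^ 2 - α) / 2 + κ * c := by gcongr
    _ = κ * (2 * L * (Module.finrank ℝ E + (W 0 - w)) / (β * L ^ 2 - α) + c) := by ring

lemma symmAverage_le_add_of_gibbsMeasure_map {m : Measure E} [m.IsAddHaarMeasure]
    (hφ : ConvexOn ℝ univ φ) (hd : Differentiable ℝ φ)
    (hα : 0 ≤ α) (hβ : 0 < β) (hV : StrongConcaveOn univ (-α) V) (hW : StrongConvexOn univ β W)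
    (hmap : (gibbsMeasure m V).map (∇ φ) = gibbsMeasure m W)
    (hsuper : Superlinear φ) {C L : ℝ} (hC : 0 ≤ C) (hgrowth : ∀ x, ‖∇ φ x‖ ≤ C * (1 + ‖x‖))
    (hL : 0 < L) (hαL : α < β * L ^ 2) (x k : E) :
    symmAverage φ k x ≤ φ x + L / 2 * ‖k‖ ^ 2 := by
  obtain ⟨K, hK⟩ :=
    exists_penalizedDifference_le hφ hd hα hβ hV hW hmap hsuper hC hgrowth hL hαL
  have hlim : Tendsto (fun κ : ℝ => κ * (K + φ x)) (𝓝[>] 0) (𝓝 0) := by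
    simpa using (tendsto_id.mul_const (K + φ x)).mono_left (nhdsWithin_le_nhds (a := (0 : ℝ)))
  have : symmAverage φ k x - φ x - L / 2 * ‖k‖ ^ 2 ≤ 0 :=
    ge_of_tendsto hlim <| eventually_nhdsWithin_of_forall fun κ hκ => by
      have := hK κ hκ x k
      rw [penalizedDifference] at this
      linarith
  linarith

end MaximumPrinciple

section Lipschitz

lemma nonpos_of_le_two_mul_half {E : Type*} [NormedAddCommGroup E] [NormedSpace ℝ E] {f : E → ℝ}
    (hderiv : HasFDerivAt f (0 : E →L[ℝ] ℝ) 0) (hzero : f 0 = 0)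
    (hhalf : ∀ v, f v ≤ 2 * f ((2 : ℝ)⁻¹ • v)) (v : E) : f v ≤ 0 := by
  have hiter : ∀ n : ℕ, f v ≤ 2 ^ n * f (((2 : ℝ) ^ n)⁻¹ • v) := fun n => by
    induction n with
    | zero => simp
    | succ n ih =>
      calc f v ≤ 2 ^ n * f (((2 : ℝ) ^ n)⁻¹ • v) := ih
        _ ≤ 2 ^ n * (2 * f ((2 : ℝ)⁻¹ • ((2 : ℝ) ^ n)⁻¹ • v)) := by gcongr; exact hhalf _
        _ = 2 ^ (n + 1) * f (((2 : ℝ) ^ (n + 1))⁻¹ • v) := by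
            rw [smul_smul, ← mul_inv, ← pow_succ']
            ring
  have hlim : Tendsto (fun n : ℕ => (2 : ℝ) ^ n * f (((2 : ℝ) ^ n)⁻¹ • v)) atTop (𝓝 0) := by
    simpa [hzero, Function.comp_def] using
      (hderiv.lim_real v).comp (tendsto_pow_atTop_atTop_of_one_lt one_lt_two)
  exact ge_of_tendsto' hlim hiter

variable {E : Type*} [NormedAddCommGroup E] [InnerProductSpace ℝ E] [CompleteSpace E] {φ : E → ℝ}

lemma bregman_le_of_symmAverage_le (hd : Differentiable ℝ φ) {L : ℝ}
    (h : ∀ x k, symmAverage φ k x ≤ φ x + L / 2 * ‖k‖ ^ 2) (x z : E) :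
    bregman φ x z ≤ L / 2 * ‖z - x‖ ^ 2 := by
  set f : E → ℝ := fun v => φ (x + v) - φ x - ⟪∇ φ x, v⟫ - L / 2 * ‖v‖ ^ 2 with hf
  have hderiv : HasFDerivAt f (0 : E →L[ℝ] ℝ) 0 := by
    have hφ := (hasFDerivAt_comp_add_left (x := 0) x).2
      (by simpa using (hd x).hasGradientAt.hasFDerivAt)
    have hsq := (hasStrictFDerivAt_norm_sq (0 : E)).hasFDerivAt.const_mul (L / 2)
    refine (((hφ.sub_const (φ x)).sub (innerSL ℝ (∇ φ x)).hasFDerivAt).sub hsq).congr_fderiv ?_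
    ext v
    simp [inner_gradient_left]
  have hhalf : ∀ v, f v ≤ 2 * f ((2 : ℝ)⁻¹ • v) := fun v => by
    have := h (x + (2 : ℝ)⁻¹ • v) ((2 : ℝ)⁻¹ • v)
    rw [symmAverage, show x + (2 : ℝ)⁻¹ • v + (2 : ℝ)⁻¹ • v = x + v by module,
      add_sub_cancel_right, smul_eq_mul] at this
    simp only [hf, inner_smul_right, norm_smul, norm_inv, Real.norm_ofNat] at this ⊢
    linarith
  have := nonpos_of_le_two_mul_half hderiv (by simp [hf]) hhalf (z - x)
  simp only [hf, add_sub_cancel] at this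
  rw [bregman]
  linarith

lemma sq_norm_gradient_sub_le_bregman (hφ : ConvexOn ℝ univ φ) (hd : Differentiable ℝ φ) {L : ℝ}
    (hL : 0 < L) (h : ∀ x z, bregman φ x z ≤ L / 2 * ‖z - x‖ ^ 2) (x z : E) :
    ‖∇ φ x - ∇ φ z‖ ^ 2 / (2 * L) ≤ bregman φ z x := by
  set q := ∇ φ x - ∇ φ z with hq
  -- The minimizer of the quadratic upper bound for `bregman φ z` around `x`.
  set y := x - L⁻¹ • q with hy
  have hyx : y - x = -(L⁻¹ • q) := by rw [hy]; abel
  have hupper := h x y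
  have hlower := bregman_nonneg hφ hd z y
  have hinner : ⟪q, y - x⟫ = -(‖q‖ ^ 2 / L) := by
    rw [hyx, inner_neg_right, inner_smul_right, real_inner_self_eq_norm_sq, inv_mul_eq_div]
  have hnorm : L / 2 * ‖y - x‖ ^ 2 = ‖q‖ ^ 2 / (2 * L) := by
    rw [hyx, norm_neg, norm_smul, norm_inv, Real.norm_of_nonneg hL.le]
    field_simp
  have hhalf : ‖q‖ ^ 2 / L = 2 * (‖q‖ ^ 2 / (2 * L)) := by field_simp
  have hsplit : ⟪∇ φ z, y - z⟫ = ⟪∇ φ z, y - x⟫ + ⟪∇ φ z, x - z⟫ := by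
    rw [← inner_add_right, sub_add_sub_cancel]
  rw [hq, inner_sub_left] at hinner
  simp only [bregman] at *
  linarith

lemma norm_gradient_sub_le_of_symmAverage_le (hφ : ConvexOn ℝ univ φ) (hd : Differentiable ℝ φ)
    {L : ℝ} (hL : 0 < L) (h : ∀ x k, symmAverage φ k x ≤ φ x + L / 2 * ‖k‖ ^ 2) (x z : E) :
    ‖∇ φ x - ∇ φ z‖ ≤ L * ‖x - z‖ := by
  have hquad := bregman_le_of_symmAverage_le hd h
  have h₁ := sq_norm_gradient_sub_le_bregman hφ hd hL hquad x z
  have h₂ := sq_norm_gradient_sub_le_bregman hφ hd hL hquad z x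
  rw [norm_sub_rev] at h₂
  have hsum : bregman φ z x + bregman φ x z = ⟪∇ φ x - ∇ φ z, x - z⟫ := by
    rw [bregman, bregman, ← neg_sub x z, inner_neg_right, inner_sub_left]
    ring
  have hcocoercive : ‖∇ φ x - ∇ φ z‖ ^ 2 / L ≤ ‖∇ φ x - ∇ φ z‖ * ‖x - z‖ :=
    calc ‖∇ φ x - ∇ φ z‖ ^ 2 / L
        = ‖∇ φ x - ∇ φ z‖ ^ 2 / (2 * L) + ‖∇ φ x - ∇ φ z‖ ^ 2 / (2 * L) := by field_simp; ring
      _ ≤ ⟪∇ φ x - ∇ φ z, x - z⟫ := hsum ▸ add_le_add h₁ h₂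
      _ ≤ ‖∇ φ x - ∇ φ z‖ * ‖x - z‖ := real_inner_le_norm _ _
  rw [div_le_iff₀ hL] at hcocoercive
  rcases (norm_nonneg (∇ φ x - ∇ φ z)).eq_or_lt with hzero | hpos
  · rw [← hzero]
    positivity
  · exact le_of_mul_le_mul_left (by linarith) hpos

end Lipschitz

section Hessian

lemma convexOn_of_comp_line {E : Type*} [AddCommGroup E] [Module ℝ E] {f : E → ℝ}
    (h : ∀ x u, ConvexOn ℝ univ fun s : ℝ => f (x + s • u)) : ConvexOn ℝ univ f := by
  refine ⟨convex_univ, fun x _ y _ a b ha hb hab => ?_⟩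
  have := (h x (y - x)).2 (mem_univ 0) (mem_univ 1) ha hb hab
  simp only [smul_eq_mul, mul_zero, mul_one, zero_add, zero_smul, add_zero, one_smul,
    add_sub_cancel] at this
  rwa [show a • x + b • y = x + b • (y - x) by rw [eq_sub_of_add_eq hab]; module]

variable {E : Type*} [NormedAddCommGroup E] [InnerProductSpace ℝ E] [CompleteSpace E]
  {f : E → ℝ} {c : ℝ}

lemma differentiable_gradient (hf : ContDiff ℝ 2 f) : Differentiable ℝ (∇ f) :=
  (InnerProductSpace.toDual ℝ E).symm.differentiable.comp
    ((hf.fderiv_right (m := 1) (by norm_num)).differentiable (by norm_num))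

lemma strongConvexOn_of_le_inner_fderiv_gradient (hf : ContDiff ℝ 2 f)
    (hc : ∀ x v, c * ‖v‖ ^ 2 ≤ ⟪fderiv ℝ (∇ f) x v, v⟫) : StrongConvexOn univ c f := by
  refine strongConvexOn_iff_convex.2 (convexOn_of_comp_line fun x u => ?_)
  have hfirst : ∀ s, HasDerivAt (fun s : ℝ => f (x + s • u) - c / 2 * ‖x + s • u‖ ^ 2)
      (⟪∇ f (x + s • u), u⟫ - c * ⟪x + s • u, u⟫) s := fun s => by
    refine ((hasDerivAt_comp_line (hf.differentiable (by norm_num) _)).sub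
      ((hasDerivAt_line x u s).norm_sq.const_mul (c / 2))).congr_deriv ?_
    ring
  have hsecond : ∀ s, HasDerivAt (fun s : ℝ => ⟪∇ f (x + s • u), u⟫ - c * ⟪x + s • u, u⟫)
      (⟪fderiv ℝ (∇ f) (x + s • u) u, u⟫ - c * ‖u‖ ^ 2) s := fun s => by
    have hgrad := (differentiable_gradient hf (x + s • u)).hasFDerivAt.comp_hasDerivAt s
      (hasDerivAt_line x u s)
    refine ((hgrad.inner ℝ (hasDerivAt_const s u)).sub
      (((hasDerivAt_line x u s).inner ℝ (hasDerivAt_const s u)).const_mul c)).congr_deriv ?_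
    simp
  have hderiv := deriv_eq hfirst
  refine convexOn_univ_of_deriv2_nonneg (fun s => (hfirst s).differentiableAt) ?_ fun s => ?_
  · rw [hderiv]
    exact fun s => (hsecond s).differentiableAt
  · rw [Function.iterate_succ, Function.iterate_one, Function.comp_apply, hderiv,
      (hsecond s).deriv]
    exact sub_nonneg.2 (hc _ u)

lemma strongConcaveOn_of_inner_fderiv_gradient_le (hf : ContDiff ℝ 2 f)
    (hc : ∀ x v, ⟪fderiv ℝ (∇ f) x v, v⟫ ≤ c * ‖v‖ ^ 2) : StrongConcaveOn univ (-c) f := by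
  have hgrad : ∇ (-f) = -∇ f := by
    simpa using! gradient_const_mul_add_const (hf.differentiable (by norm_num)) (-1) 0
  have hneg : StrongConvexOn univ (-c) (-f) :=
    strongConvexOn_of_le_inner_fderiv_gradient hf.neg fun x v => by
      rw [hgrad, fderiv_neg]
      simpa [inner_neg_left] using hc x v
  simpa using! UniformConvexOn.neg hneg

end Hessian

section Contraction

variable {E : Type*} [NormedAddCommGroup E] [InnerProductSpace ℝ E] [FiniteDimensional ℝ E]
  [MeasurableSpace E] [BorelSpace E] {φ V W : E → ℝ} {α β : ℝ}

lemma superlinear_of_gibbsMeasure_map {m : Measure E} [m.IsAddHaarMeasure]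
    (hφ : ConvexOn ℝ univ φ) (hd : Differentiable ℝ φ) (hW : Continuous W)
    (hmap : (gibbsMeasure m V).map (∇ φ) = gibbsMeasure m W) : Superlinear φ :=
  superlinear_of_denseRange_gradient hφ hd <|
    denseRange_of_absolutelyContinuous_map (continuous_gradient hφ hd).measurable
      (hmap ▸ absolutelyContinuous_gibbsMeasure m hW)

lemma exists_norm_gradient_le (hφ : ConvexOn ℝ univ φ) (hd : Differentiable ℝ φ) (hα : 0 ≤ α)
    (hβ : 0 < β) (hV : StrongConcaveOn univ (-α) V) (hW : StrongConvexOn univ β W)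
    (hmap : (gibbsMeasure volume V).map (∇ φ) = gibbsMeasure volume W) :
    ∃ C, 0 ≤ C ∧ ∀ x, ‖∇ φ x‖ ≤ C * (1 + ‖x‖) := by
  obtain ⟨a, ha, hVa⟩ := exists_le_mul_sq_of_strongConcaveOn hα hV
  obtain ⟨A, hA, hball⟩ := exists_le_gibbsMeasure_ball volume ha hVa
  obtain ⟨b, hWb⟩ := exists_sq_norm_sub_le_of_strongConvexOn hβ hW
  obtain ⟨B, htail⟩ := exists_gibbsMeasure_tail_le (by positivity) hWb
  exact exists_linear_bound_of_monotone (inner_gradient_sub_nonneg hφ hd)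
    (continuous_gradient hφ hd).measurable hA (by positivity) hball (hmap ▸ htail)

end Contraction

end Caffarelli

open Caffarelli in
theorem caffarelli_contraction_general {E : Type*} [NormedAddCommGroup E] [InnerProductSpace ℝ E]
    [FiniteDimensional ℝ E] [MeasurableSpace E] [BorelSpace E] {V W φ : E → ℝ} {α β : ℝ}
    (hα : 0 ≤ α) (hβ : 0 < β) (hV : StrongConcaveOn Set.univ (-α) V)
    (hW : StrongConvexOn Set.univ β W) (hφ : ConvexOn ℝ Set.univ φ) (hd : Differentiable ℝ φ)
    (hmap : (gibbsMeasure volume V).map (gradient φ) = gibbsMeasure volume W) :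
    LipschitzWith (Real.toNNReal √(α / β)) (gradient φ) := by
  have hsuper := superlinear_of_gibbsMeasure_map hφ hd (continuous_of_strongConvexOn hW) hmap
  obtain ⟨C, hC, hgrowth⟩ := exists_norm_gradient_le hφ hd hα hβ hV hW hmap
  refine LipschitzWith.of_dist_le_mul fun x z => ?_
  rw [dist_eq_norm, dist_eq_norm, Real.coe_toNNReal _ (sqrt_nonneg _)]
  have hlip : ∀ L ∈ Set.Ioi √(α / β), ‖gradient φ x - gradient φ z‖ ≤ L * ‖x - z‖ := fun L hL => by
    have hL_pos := (sqrt_nonneg _).trans_lt hL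
    have hαL : α < β * L ^ 2 := by
      rw [mul_comm]
      exact (div_lt_iff₀ hβ).1 ((sqrt_lt' hL_pos).1 hL)
    exact norm_gradient_sub_le_of_symmAverage_le hφ hd hL_pos
      (symmAverage_le_add_of_gibbsMeasure_map hφ hd hα hβ hV hW hmap hsuper hC hgrowth hL_pos hαL)
      x z
  have hmem : √(α / β) ∈ closure (Set.Ioi √(α / β)) := by simp
  have hcont : Continuous fun L : ℝ => L * ‖x - z‖ := by fun_prop
  exact closure_minimal hlip (isClosed_le continuous_const hcont) hmem

/-- Caffarelli's contraction theorem: under (A1), the Brenier map `∇φ₀`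
is globally Lipschitz with constant at most `√(α/β)`. -/
theorem caffarelli_contraction {d : ℕ}
    (μ ν : Measure (EuclideanSpace ℝ (Fin d)))
    (V W : EuclideanSpace ℝ (Fin d) → ℝ) (α β : ℝ)
    (hA1 : AssumptionA1 μ ν V W α β)
    (φ₀ : EuclideanSpace ℝ (Fin d) → ℝ) (hφ₀ : IsBrenierPotential μ ν φ₀) :
    LipschitzWith (Real.toNNReal (Real.sqrt (α / β))) (fun x => gradient φ₀ x) := by
  obtain ⟨-, -, hμ, hν, hV, hW, hα, hβ, hVα, hWβ⟩ := hA1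
  obtain ⟨hc, hd, hmap⟩ := hφ₀
  rw [hμ, hν] at hmap
  have htwo : (2 : WithTop ℕ∞) ≤ (⊤ : ℕ∞) := WithTop.coe_le_coe.2 le_top
  exact caffarelli_contraction_general hα.le hβ
    (Caffarelli.strongConcaveOn_of_inner_fderiv_gradient_le (hV.of_le htwo) hVα)
    (Caffarelli.strongConvexOn_of_le_inner_fderiv_gradient (hW.of_le htwo) hWβ) hc hd hmap
end

section
/- Suppose μ and ν are probability measures on ℝ^d satisfying assumption (A1) with constants α, β > 0. Let ε > 0 and let (f_ε, g_ε) be a Schrödinger pair for (μ, ν, ε), with entropic potential φ_ε := |·|²/2 − f_ε. Then φ_ε is twice differentiable, ∇φ_ε is globally Lipschitz, and for every x ∈ ℝ^d, 0 ≼ ∇²φ_ε(x) ≼ (1/2)(√(4α/β + ε²α²) − εα) · I_d. In particular, since (1/2)(√(4α/β + ε²α²) − εα) ≤ √(α/β), the Lipschitz constant of ∇φ_ε is at most √(α/β) uniformly in ε. -/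
open MeasureTheory Real
open scoped RealInnerProductSpace

/-!
The Schrödinger equations say that the entropic potentials `φ` of `f` and `ψ` of `g` are entropic
Legendre transforms of each other, with `ν` and `μ` as reference measures. With respect to Lebesgue
measure, `φ` is the transform of `ψ + εW` and `ψ` is the transform of `φ + εV`. By the
Prékopa–Leindler inequality the transform of a `κ`-strongly convex function is `κ⁻¹`-smooth, and by
Hölder's inequality the transform of an `M`-smooth function is `M⁻¹`-strongly convex. Hence if `φ`
is `L`-smooth, then it is also `((L + εα)⁻¹ + εβ)⁻¹`-smooth. The least smoothness constant `L ≥ 0`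
of `φ` therefore satisfies `L ≤ ((L + εα)⁻¹ + εβ)⁻¹`, that is, `L² + εαL ≤ α/β`. No smoothness of
`φ` is needed to start: convexity of `ψ` already gives the constant `(εβ)⁻¹`.
-/

open Set Filter Topology Module
open scoped ENNReal Pointwise Gradient

section PrekopaLeindler

theorem volume_add_volume_le_of_isCompact {K L : Set ℝ} (hK : IsCompact K) (hL : IsCompact L)
    (hK₀ : K.Nonempty) (hL₀ : L.Nonempty) : volume K + volume L ≤ volume (K + L) := by
  obtain ⟨M, hM⟩ := hK.exists_isGreatest hK₀
  obtain ⟨m, hm⟩ := hL.exists_isLeast hL₀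
  have hmeas : MeasurableSet ({M} + L) := (isCompact_singleton.add hL).measurableSet
  have hinter : (K + {m}) ∩ ({M} + L) ⊆ {M + m} := by
    rintro _ ⟨⟨x, hx, _, rfl, rfl⟩, ⟨_, rfl, y, hy, hxy⟩⟩
    have := hM.2 hx
    have := hm.2 hy
    simp only [mem_singleton_iff] at hxy ⊢
    linarith
  calc volume K + volume L
      = volume (K + {m}) + volume ({M} + L) := by simp
    _ = volume ((K + {m}) ∪ ({M} + L)) :=
        (measure_union₀ hmeas.nullMeasurableSet (measure_mono_null hinter (by simp))).symm
    _ ≤ volume (K + L) :=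
        measure_mono (union_subset (add_subset_add_left (by simpa using hm.1))
          (add_subset_add_right (by simpa using hM.1)))

theorem volume_add_volume_le {A B : Set ℝ} (hA : MeasurableSet A) (hB : MeasurableSet B)
    (hA₀ : A.Nonempty) (hB₀ : B.Nonempty) : volume A + volume B ≤ volume (A + B) := by
  obtain ⟨a, ha⟩ := hA₀
  obtain ⟨b, hb⟩ := hB₀
  rw [hA.measure_eq_iSup_isCompact, hB.measure_eq_iSup_isCompact]
  simp only [iSup_and']
  refine ENNReal.biSup_add_biSup_le' (p := fun K ↦ K ⊆ A ∧ IsCompact K)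
    (q := fun K ↦ K ⊆ B ∧ IsCompact K) ⟨∅, by simp⟩ ⟨∅, by simp⟩ ?_
  rintro K ⟨hKA, hK⟩ L ⟨hLB, hL⟩
  calc volume K + volume L
      ≤ volume (insert a K) + volume (insert b L) := by gcongr <;> exact subset_insert _ _
    _ ≤ volume (insert a K + insert b L) :=
        volume_add_volume_le_of_isCompact (hK.insert a) (hL.insert b)
          (insert_nonempty _ _) (insert_nonempty _ _)
    _ ≤ volume (A + B) :=
        measure_mono (add_subset_add (insert_subset ha hKA) (insert_subset hb hLB))

theorem volume_setOf_pos_ofReal_lt (c : ℝ≥0∞) :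
    volume {t : ℝ | 0 < t ∧ ENNReal.ofReal t < c} = c := by
  induction c with
  | top => simp [Ioi_def]
  | coe c =>
    have : {t : ℝ | 0 < t ∧ ENNReal.ofReal t < c} = Ioo 0 (c : ℝ) := by
      ext t
      refine and_congr_right fun ht ↦ ?_
      rw [ENNReal.ofReal_lt_coe_iff ht.le]
    simp [this]

theorem lintegral_eq_lintegral_meas_ofReal_lt {α : Type*} [MeasurableSpace α] (μ : Measure α)
    [SFinite μ] {f : α → ℝ≥0∞} (hf : Measurable f) :
    ∫⁻ x, f x ∂μ = ∫⁻ t in Ioi (0 : ℝ), μ {x | ENNReal.ofReal t < f x} := by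
  have hmeas : MeasurableSet {p : α × ℝ | 0 < p.2 ∧ ENNReal.ofReal p.2 < f p.1} := by
    measurability
  calc ∫⁻ x, f x ∂μ = (μ.prod volume) {p | 0 < p.2 ∧ ENNReal.ofReal p.2 < f p.1} := by
        rw [Measure.prod_apply hmeas]
        exact lintegral_congr fun x ↦ (volume_setOf_pos_ofReal_lt (f x)).symm
    _ = ∫⁻ t in Ioi (0 : ℝ), μ {x | ENNReal.ofReal t < f x} := by
        rw [Measure.prod_apply_symm hmeas, ← lintegral_indicator measurableSet_Ioi]
        refine lintegral_congr fun t ↦ ?_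
        by_cases ht : 0 < t <;> simp [ht]

theorem lintegral_add_lintegral_le_of_min_le {a b : ℝ} (ha : 0 < a) (hb : 0 < b)
    {u v h : ℝ → ℝ≥0∞} (hu : Measurable u) (hv : Measurable v) (hh : Measurable h)
    (hsup : ⨆ x, u x = ⨆ x, v x) (H : ∀ x y, min (u x) (v y) ≤ h (a • x + b • y)) :
    ENNReal.ofReal a * (∫⁻ x, u x) + ENNReal.ofReal b * (∫⁻ x, v x) ≤ ∫⁻ x, h x := by
  have hmeas {w : ℝ → ℝ≥0∞} (hw : Measurable w) (t : ℝ) :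
      MeasurableSet {x | ENNReal.ofReal t < w x} := measurableSet_lt measurable_const hw
  rw [lintegral_eq_lintegral_meas_ofReal_lt _ hu, lintegral_eq_lintegral_meas_ofReal_lt _ hv,
    lintegral_eq_lintegral_meas_ofReal_lt _ hh,
    ← lintegral_const_mul' _ _ ENNReal.ofReal_ne_top,
    ← lintegral_const_mul' _ _ ENNReal.ofReal_ne_top]
  refine (le_lintegral_add _ _).trans (lintegral_mono fun t ↦ ?_)
  rcases le_or_gt (⨆ x, u x) (ENNReal.ofReal t) with ht | ht
  · have hu₀ : {x | ENNReal.ofReal t < u x} = ∅ :=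
      eq_empty_of_forall_notMem fun x hx ↦ (hx.trans_le (le_iSup u x)).not_ge ht
    have hv₀ : {x | ENNReal.ofReal t < v x} = ∅ :=
      eq_empty_of_forall_notMem fun x hx ↦ (hx.trans_le (le_iSup v x)).not_ge (hsup ▸ ht)
    simp [hu₀, hv₀]
  · have hvol (c : ℝ) (hc : 0 < c) (A : Set ℝ) :
        ENNReal.ofReal c * volume A = volume (c • A) := by
      simp [Measure.addHaar_smul, abs_of_pos hc]
    have hu₀ : {x | ENNReal.ofReal t < u x}.Nonempty := lt_iSup_iff.1 ht
    have hv₀ : {x | ENNReal.ofReal t < v x}.Nonempty := lt_iSup_iff.1 (ht.trans_eq hsup)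
    rw [hvol a ha, hvol b hb]
    refine (volume_add_volume_le ((hmeas hu t).const_smul₀ a) ((hmeas hv t).const_smul₀ b)
      hu₀.smul_set hv₀.smul_set).trans (measure_mono ?_)
    rintro _ ⟨_, ⟨x, hx, rfl⟩, _, ⟨y, hy, rfl⟩, rfl⟩
    exact (lt_min hx hy).trans_le (H x y)

theorem ennreal_geom_mean_le_arith_mean2_weighted {a b : ℝ} (ha : 0 < a) (hb : 0 < b)
    (hab : a + b = 1) (x y : ℝ≥0∞) :
    x ^ a * y ^ b ≤ ENNReal.ofReal a * x + ENNReal.ofReal b * y := by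
  induction x with
  | top => simp [ENNReal.mul_top, ha]
  | coe x =>
  induction y with
  | top => simp [ENNReal.mul_top, hb]
  | coe y =>
    lift a to NNReal using ha.le
    lift b to NNReal using hb.le
    rw [← ENNReal.coe_rpow_of_nonneg _ ha.le, ← ENNReal.coe_rpow_of_nonneg _ hb.le]
    simp only [ENNReal.ofReal_coe_nnreal]
    exact_mod_cast NNReal.geom_mean_le_arith_mean2_weighted a b x y (by exact_mod_cast hab)

theorem ennreal_min_le_rpow_mul_rpow {a b : ℝ} (ha : 0 ≤ a) (hb : 0 ≤ b) (hab : a + b = 1)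
    (x y : ℝ≥0∞) : min x y ≤ x ^ a * y ^ b :=
  calc min x y = min x y ^ a * min x y ^ b := by
        rw [← ENNReal.rpow_add_of_nonneg _ _ ha hb, hab, ENNReal.rpow_one]
    _ ≤ x ^ a * y ^ b := by gcongr <;> simp

theorem lintegral_rpow_mul_lintegral_rpow_le_of_iSup_eq {a b : ℝ} (ha : 0 < a) (hb : 0 < b)
    (hab : a + b = 1) {u v h : ℝ → ℝ≥0∞} (hu : Measurable u) (hv : Measurable v)
    (hh : Measurable h) (hsup : ⨆ x, u x = ⨆ x, v x)
    (H : ∀ x y, u x ^ a * v y ^ b ≤ h (a • x + b • y)) :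
    (∫⁻ x, u x) ^ a * (∫⁻ x, v x) ^ b ≤ ∫⁻ x, h x :=
  (ennreal_geom_mean_le_arith_mean2_weighted ha hb hab _ _).trans <|
    lintegral_add_lintegral_le_of_min_le ha hb hu hv hh hsup fun x y ↦
      (ennreal_min_le_rpow_mul_rpow ha.le hb.le hab _ _).trans (H x y)

theorem lintegral_rpow_mul_lintegral_rpow_le_of_iSup_ne_top {a b : ℝ} (ha : 0 < a) (hb : 0 < b)
    (hab : a + b = 1) {u v h : ℝ → ℝ≥0∞} (hu : Measurable u) (hv : Measurable v)
    (hh : Measurable h) (hu_top : ⨆ x, u x ≠ ∞) (hv_top : ⨆ x, v x ≠ ∞)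
    (H : ∀ x y, u x ^ a * v y ^ b ≤ h (a • x + b • y)) :
    (∫⁻ x, u x) ^ a * (∫⁻ x, v x) ^ b ≤ ∫⁻ x, h x := by
  rcases eq_or_ne (⨆ x, u x) 0 with hu₀ | hu₀
  · have : ∀ x, u x = 0 := by simpa using hu₀
    simp [this, ha]
  rcases eq_or_ne (⨆ x, v x) 0 with hv₀ | hv₀
  · have : ∀ x, v x = 0 := by simpa using hv₀
    simp [this, hb]
  set c : ℝ≥0∞ := (⨆ x, v x) / ⨆ x, u x
  have hc₀ : c ^ a ≠ 0 := (ENNReal.rpow_pos (ENNReal.div_pos hv₀ hu_top)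
    (ENNReal.div_ne_top hv_top hu₀)).ne'
  have hc_top : c ^ a ≠ ∞ := ENNReal.rpow_ne_top_of_nonneg ha.le (ENNReal.div_ne_top hv_top hu₀)
  have hscaled : (∫⁻ x, c * u x) ^ a * (∫⁻ x, v x) ^ b ≤ ∫⁻ x, c ^ a * h x := by
    refine lintegral_rpow_mul_lintegral_rpow_le_of_iSup_eq ha hb hab (hu.const_mul c) hv
      (hh.const_mul _) ?_ fun x y ↦ ?_
    · rw [← ENNReal.mul_iSup, ENNReal.div_mul_cancel hu₀ hu_top]
    · rw [ENNReal.mul_rpow_of_nonneg _ _ ha.le, mul_assoc]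
      gcongr
      exact H x y
  rw [lintegral_const_mul _ hu, lintegral_const_mul _ hh, ENNReal.mul_rpow_of_nonneg _ _ ha.le,
    mul_assoc] at hscaled
  exact (ENNReal.mul_le_mul_iff_right hc₀ hc_top).1 hscaled

theorem tendsto_lintegral_min_natCast {α : Type*} [MeasurableSpace α] {μ : Measure α}
    {w : α → ℝ≥0∞} (hw : AEMeasurable w μ) :
    Tendsto (fun n : ℕ ↦ ∫⁻ x, min (w x) n ∂μ) atTop (𝓝 (∫⁻ x, w x ∂μ)) := by
  refine lintegral_tendsto_of_tendsto_of_monotone (fun n ↦ hw.min aemeasurable_const)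
    (.of_forall fun x n m hnm ↦ by dsimp only; gcongr) (.of_forall fun x ↦ ?_)
  simpa using (tendsto_const_nhds (x := w x)).min ENNReal.tendsto_nat_nhds_top

/-- A measure on a real vector space satisfies the Prékopa–Leindler inequality, the functional
form of log-concavity. Weights `0` and `1` are allowed. -/
def IsPrekopaLeindler {E : Type*} [AddCommMonoid E] [SMul ℝ E] [MeasurableSpace E]
    (μ : Measure E) : Prop :=
  ∀ ⦃a b : ℝ⦄, 0 ≤ a → 0 ≤ b → a + b = 1 → ∀ ⦃u v h : E → ℝ≥0∞⦄,
    Measurable u → Measurable v → Measurable h →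
    (∀ x y, u x ^ a * v y ^ b ≤ h (a • x + b • y)) →
    (∫⁻ x, u x ∂μ) ^ a * (∫⁻ x, v x ∂μ) ^ b ≤ ∫⁻ x, h x ∂μ

theorem isPrekopaLeindler_volume_real : IsPrekopaLeindler (volume : Measure ℝ) := by
  intro a b ha hb hab u v h hu hv hh H
  rcases ha.eq_or_lt with rfl | ha
  · obtain rfl : b = 1 := by linarith
    simpa using lintegral_mono fun x ↦ by simpa using H x x
  rcases hb.eq_or_lt with rfl | hb
  · obtain rfl : a = 1 := by linarith
    simpa using lintegral_mono fun x ↦ by simpa using H x x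
  by_cases hu₀ : ∫⁻ x, u x = 0
  · simp [hu₀, ha]
  by_cases hv₀ : ∫⁻ x, v x = 0
  · simp [hv₀, hb]
  have hlim {c : ℝ} {w : ℝ → ℝ≥0∞} (hw : Measurable w) :
      Tendsto (fun n : ℕ ↦ (∫⁻ x, min (w x) n) ^ c) atTop (𝓝 ((∫⁻ x, w x) ^ c)) :=
    (ENNReal.continuous_rpow_const.tendsto _).comp (tendsto_lintegral_min_natCast hw.aemeasurable)
  have hbdd (w : ℝ → ℝ≥0∞) (n : ℕ) : ⨆ x, min (w x) n ≠ ∞ :=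
    ((iSup_le fun x ↦ min_le_right _ _).trans_lt (ENNReal.natCast_lt_top n)).ne
  refine le_of_tendsto' (ENNReal.Tendsto.mul (hlim hu) (.inl (by simp [hu₀, ha.not_gt]))
    (hlim hv) (.inl (by simp [hv₀, hb.not_gt]))) fun n ↦ ?_
  refine lintegral_rpow_mul_lintegral_rpow_le_of_iSup_ne_top ha hb hab
    (hu.min measurable_const) (hv.min measurable_const) hh (hbdd u n) (hbdd v n) fun x y ↦ ?_
  refine le_trans ?_ (H x y)
  gcongr <;> exact min_le_left _ _

namespace IsPrekopaLeindler

variable {E F : Type*} [AddCommGroup E] [Module ℝ E] [MeasurableSpace E]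
  [AddCommGroup F] [Module ℝ F] [MeasurableSpace F] {μ : Measure E} {ν : Measure F}

theorem dirac_zero : IsPrekopaLeindler (Measure.dirac (0 : E)) := by
  rintro a b - - - u v h hu hv hh H
  simpa [lintegral_dirac', hu, hv, hh] using H 0 0

theorem smul (hμ : IsPrekopaLeindler μ) (c : ℝ≥0∞) : IsPrekopaLeindler (c • μ) := by
  intro a b ha hb hab u v h hu hv hh H
  simp only [lintegral_smul_measure, smul_eq_mul]
  calc (c * ∫⁻ x, u x ∂μ) ^ a * (c * ∫⁻ x, v x ∂μ) ^ b
      = c ^ (a + b) * ((∫⁻ x, u x ∂μ) ^ a * (∫⁻ x, v x ∂μ) ^ b) := by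
        rw [ENNReal.rpow_add_of_nonneg _ _ ha hb, ENNReal.mul_rpow_of_nonneg _ _ ha,
          ENNReal.mul_rpow_of_nonneg _ _ hb, mul_mul_mul_comm]
    _ ≤ c * ∫⁻ x, h x ∂μ := by
        rw [hab, ENNReal.rpow_one]
        gcongr
        exact hμ ha hb hab hu hv hh H

theorem map (hμ : IsPrekopaLeindler μ) (L : E →ₗ[ℝ] F) (hL : Measurable L) :
    IsPrekopaLeindler (μ.map L) := by
  intro a b ha hb hab u v h hu hv hh H
  rw [lintegral_map hu hL, lintegral_map hv hL, lintegral_map hh hL]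
  exact hμ ha hb hab (hu.comp hL) (hv.comp hL) (hh.comp hL)
    fun x y ↦ by simpa using H (L x) (L y)

theorem prod [SFinite ν] (hμ : IsPrekopaLeindler μ) (hν : IsPrekopaLeindler ν) :
    IsPrekopaLeindler (μ.prod ν) := by
  intro a b ha hb hab u v h hu hv hh H
  rw [lintegral_prod _ hu.aemeasurable, lintegral_prod _ hv.aemeasurable,
    lintegral_prod _ hh.aemeasurable]
  exact hμ ha hb hab hu.lintegral_prod_right' hv.lintegral_prod_right' hh.lintegral_prod_right'
    fun s t ↦ hν ha hb hab (hu.comp measurable_prodMk_left) (hv.comp measurable_prodMk_left)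
      (hh.comp measurable_prodMk_left) fun x y ↦ H (s, x) (t, y)

end IsPrekopaLeindler

theorem isPrekopaLeindler_volume_pi (n : ℕ) :
    IsPrekopaLeindler (volume : Measure (Fin n → ℝ)) := by
  induction n with
  | zero =>
    rw [Measure.volume_pi_eq_dirac (0 : Fin 0 → ℝ)]
    exact .dirac_zero
  | succ n ih =>
    let L : ℝ × (Fin n → ℝ) →ₗ[ℝ] Fin (n + 1) → ℝ := (Fin.consLinearEquiv ℝ fun _ ↦ ℝ).toLinearMap
    have hL : MeasurePreserving L := by
      convert (volume_preserving_piFinSuccAbove (fun _ : Fin (n + 1) ↦ ℝ) 0).symm using 1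
      exact funext fun p ↦ (Fin.insertNth_zero' p.1 p.2).symm
    rw [← hL.map_eq]
    exact (isPrekopaLeindler_volume_real.prod ih).map L hL.measurable

theorem isPrekopaLeindler_of_isAddHaarMeasure {E : Type*} [NormedAddCommGroup E]
    [NormedSpace ℝ E] [FiniteDimensional ℝ E] [MeasurableSpace E] [BorelSpace E]
    (μ : Measure E) [μ.IsAddHaarMeasure] : IsPrekopaLeindler μ := by
  let e : (Fin (finrank ℝ E) → ℝ) ≃L[ℝ] E := .ofFinrankEq (by simp)
  have : (volume.map e).IsAddHaarMeasure := e.isAddHaarMeasure_map volume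
  rw [Measure.isAddLeftInvariant_eq_smul μ (volume.map e)]
  exact ((isPrekopaLeindler_volume_pi _).map e.toLinearEquiv.toLinearMap
    e.continuous.measurable).smul _

end PrekopaLeindler

section EntropicLegendre

/-- The Boltzmann factor `exp (t / ε)` of the energy gain `t` at temperature `ε`, as an extended
nonnegative real. -/
noncomputable def boltzmann (ε t : ℝ) : ℝ≥0∞ := ENNReal.ofReal (exp (t / ε))

@[fun_prop]
theorem measurable_boltzmann (ε : ℝ) : Measurable (boltzmann ε) := by
  unfold boltzmann
  fun_prop

theorem boltzmann_rpow_mul_rpow (ε a b s t : ℝ) :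
    boltzmann ε s ^ a * boltzmann ε t ^ b = boltzmann ε (a * s + b * t) := by
  simp only [boltzmann]
  rw [ENNReal.ofReal_rpow_of_pos (exp_pos _), ENNReal.ofReal_rpow_of_pos (exp_pos _),
    ← ENNReal.ofReal_mul (by positivity), ← exp_mul, ← exp_mul, ← exp_add]
  ring_nf

theorem boltzmann_mul (ε s t : ℝ) : boltzmann ε s * boltzmann ε t = boltzmann ε (s + t) := by
  simpa using boltzmann_rpow_mul_rpow ε 1 1 s t

theorem boltzmann_le_boltzmann {ε : ℝ} (hε : 0 < ε) {s t : ℝ} :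
    boltzmann ε s ≤ boltzmann ε t ↔ s ≤ t := by
  rw [boltzmann, boltzmann, ENNReal.ofReal_le_ofReal_iff (exp_pos _).le, exp_le_exp,
    div_le_div_iff_of_pos_right hε]

theorem real_inner_le_inv_mul_norm_sq_add {E : Type*} [NormedAddCommGroup E]
    [InnerProductSpace ℝ E] {κ : ℝ} (hκ : 0 < κ) (x y : E) :
    ⟪x, y⟫ ≤ κ⁻¹ / 2 * ‖x‖ ^ 2 + κ / 2 * ‖y‖ ^ 2 := by
  have hsq : 0 ≤ κ⁻¹ / 2 * (‖x‖ - κ * ‖y‖) ^ 2 := by positivity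
  have hexpand : κ⁻¹ / 2 * (‖x‖ - κ * ‖y‖) ^ 2 =
      κ⁻¹ / 2 * ‖x‖ ^ 2 + κ / 2 * ‖y‖ ^ 2 - ‖x‖ * ‖y‖ := by field
  linarith [real_inner_le_norm x y]

variable {E : Type*} [NormedAddCommGroup E] [InnerProductSpace ℝ E] [MeasurableSpace E]

/-- The (unnormalized) Gibbs measure `e^{-W} dm` with potential `W` and reference measure `m`. -/
noncomputable def gibbsMeasure (m : Measure E) (W : E → ℝ) : Measure E :=
  m.withDensity fun y ↦ ENNReal.ofReal (exp (-W y))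

/-- `Λ` is the entropic Legendre transform of `U` with respect to `m`: the soft maximum
`Λ x = ε log ∫ exp ((⟪x, y⟫ - U y) / ε) dm(y)`, which formally tends to the convex conjugate of `U`
as `ε → 0`. It is stated in exponential form in `ℝ≥0∞`, so that finiteness and positivity of the
integrals are part of the notion. -/
def IsEntropicLegendre (m : Measure E) (ε : ℝ) (U Λ : E → ℝ) : Prop :=
  ∀ x, ∫⁻ y, boltzmann ε (⟪x, y⟫ - U y) ∂m = boltzmann ε (Λ x)

namespace IsEntropicLegendre

variable [BorelSpace E] [SecondCountableTopology E] {m : Measure E} {ε : ℝ} {U Λ : E → ℝ}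

theorem of_gibbsMeasure {W : E → ℝ} (hε : ε ≠ 0) (hW : Measurable W) (hU : Measurable U)
    (h : IsEntropicLegendre (gibbsMeasure m W) ε U Λ) :
    IsEntropicLegendre m ε (U + ε • W) Λ := by
  intro x
  rw [← h x, gibbsMeasure, lintegral_withDensity_eq_lintegral_mul _ (by fun_prop) (by fun_prop)]
  refine lintegral_congr fun y ↦ ?_
  have hdensity : ENNReal.ofReal (exp (-W y)) = boltzmann ε (-(ε * W y)) := by
    rw [boltzmann, neg_div, mul_div_cancel_left₀ _ hε]
  rw [Pi.mul_apply, hdensity, boltzmann_mul, Pi.add_apply, Pi.smul_apply, smul_eq_mul]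
  ring_nf

theorem strongConcaveOn (hm : IsPrekopaLeindler m) (hε : 0 < ε) (hU : Measurable U)
    (h : IsEntropicLegendre m ε U Λ) {κ : ℝ} (hκ : 0 < κ) (hUκ : StrongConvexOn univ κ U) :
    StrongConcaveOn univ (-κ⁻¹) Λ := by
  refine ⟨convex_univ, fun x₁ _ x₂ _ a b ha hb hab ↦ ?_⟩
  set x := a • x₁ + b • x₂
  set c : ℝ := a * b * (κ⁻¹ / 2 * ‖x₁ - x₂‖ ^ 2)
  have hpoint (y₁ y₂ : E) : a * (⟪x₁, y₁⟫ - U y₁) + b * (⟪x₂, y₂⟫ - U y₂) ≤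
      c + (⟪x, a • y₁ + b • y₂⟫ - U (a • y₁ + b • y₂)) := by
    have hinner : a * ⟪x₁, y₁⟫ + b * ⟪x₂, y₂⟫ =
        ⟪x, a • y₁ + b • y₂⟫ + a * b * ⟪x₁ - x₂, y₁ - y₂⟫ := by
      obtain rfl : b = 1 - a := by linarith
      simp only [x, inner_add_left, inner_add_right, inner_sub_left, inner_sub_right,
        real_inner_smul_left, real_inner_smul_right]
      ring
    have hconv := hUκ.2 (mem_univ y₁) (mem_univ y₂) ha hb hab
    have hyoung := mul_le_mul_of_nonneg_left
      (real_inner_le_inv_mul_norm_sq_add hκ (x₁ - x₂) (y₁ - y₂)) (mul_nonneg ha hb)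
    simp only [smul_eq_mul, c] at hconv ⊢
    linarith
  have hint : boltzmann ε (Λ x₁) ^ a * boltzmann ε (Λ x₂) ^ b ≤
      boltzmann ε c * boltzmann ε (Λ x) := by
    rw [← h, ← h, ← h, ← lintegral_const_mul _ (by fun_prop)]
    refine hm ha hb hab (by fun_prop) (by fun_prop) (by fun_prop) fun y₁ y₂ ↦ ?_
    rw [boltzmann_rpow_mul_rpow, boltzmann_mul, boltzmann_le_boltzmann hε]
    exact hpoint y₁ y₂
  rw [boltzmann_rpow_mul_rpow, boltzmann_mul, boltzmann_le_boltzmann hε] at hint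
  simp only [smul_eq_mul, c] at hint ⊢
  linarith

theorem convexOn (hε : 0 < ε) (hU : Measurable U) (h : IsEntropicLegendre m ε U Λ) :
    ConvexOn ℝ univ Λ := by
  refine ⟨convex_univ, fun x₁ _ x₂ _ a b ha hb hab ↦ ?_⟩
  have hpoint (y : E) : a * (⟪x₁, y⟫ - U y) + b * (⟪x₂, y⟫ - U y) =
      ⟪a • x₁ + b • x₂, y⟫ - U y := by
    rw [inner_add_left, real_inner_smul_left, real_inner_smul_left]
    linear_combination -U y * hab
  have hholder := ENNReal.lintegral_mul_norm_pow_le (μ := m)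
    (f := fun y ↦ boltzmann ε (⟪x₁, y⟫ - U y)) (g := fun y ↦ boltzmann ε (⟪x₂, y⟫ - U y))
    (by fun_prop) (by fun_prop) ha hb hab
  simp only [boltzmann_rpow_mul_rpow, hpoint, h _, boltzmann_le_boltzmann hε] at hholder
  exact hholder

-- Hölder's inequality, after translating the two factors by `b • s` and `-a • s`.
theorem add_mul_inner_sub_le [m.IsAddRightInvariant] (hε : 0 < ε) (hU : Measurable U)
    (h : IsEntropicLegendre m ε U Λ) {a b c : ℝ} (ha : 0 ≤ a) (hb : 0 ≤ b) (hab : a + b = 1)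
    {s : E} (hs : ∀ z, a * U (z + b • s) + b * U (z - a • s) ≤ U z + a * b * c) (x₁ x₂ : E) :
    Λ (a • x₁ + b • x₂) + a * b * (⟪x₁ - x₂, s⟫ - c) ≤ a * Λ x₁ + b * Λ x₂ := by
  set x := a • x₁ + b • x₂
  set r : ℝ := a * b * (⟪x₁ - x₂, s⟫ - c)
  have hpoint (z : E) : r + (⟪x, z⟫ - U z) ≤ a * (⟪x₁, z + b • s⟫ - U (z + b • s)) +
      b * (⟪x₂, z - a • s⟫ - U (z - a • s)) := by
    have hinner : a * ⟪x₁, z + b • s⟫ + b * ⟪x₂, z - a • s⟫ =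
        ⟪x, z⟫ + a * b * ⟪x₁ - x₂, s⟫ := by
      simp only [x, inner_add_left, inner_add_right, inner_sub_left, inner_sub_right,
        real_inner_smul_left, real_inner_smul_right]
      ring
    have := hs z
    simp only [r]
    linarith
  have hint : boltzmann ε r * boltzmann ε (Λ x) ≤
      boltzmann ε (Λ x₁) ^ a * boltzmann ε (Λ x₂) ^ b := by
    rw [← h, ← h, ← h, ← lintegral_const_mul _ (by fun_prop),
      ← lintegral_add_right_eq_self (fun y ↦ boltzmann ε (⟪x₁, y⟫ - U y)) (b • s),
      ← lintegral_sub_right_eq_self (fun y ↦ boltzmann ε (⟪x₂, y⟫ - U y)) (a • s)]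
    refine (lintegral_mono fun z ↦ ?_).trans
      (ENNReal.lintegral_mul_norm_pow_le (by fun_prop) (by fun_prop) ha hb hab)
    rw [boltzmann_rpow_mul_rpow, boltzmann_mul, boltzmann_le_boltzmann hε]
    exact hpoint z
  rwa [boltzmann_rpow_mul_rpow, boltzmann_mul, boltzmann_le_boltzmann hε, add_comm] at hint

theorem strongConvexOn [m.IsAddRightInvariant] (hε : 0 < ε) (hU : Measurable U)
    (h : IsEntropicLegendre m ε U Λ) {M : ℝ} (hM : 0 < M) (hUM : StrongConcaveOn univ (-M) U) :
    StrongConvexOn univ M⁻¹ Λ := by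
  refine ⟨convex_univ, fun x₁ _ x₂ _ a b ha hb hab ↦ ?_⟩
  set s := M⁻¹ • (x₁ - x₂) with hs
  have hsmooth (z : E) :
      a * U (z + b • s) + b * U (z - a • s) ≤ U z + a * b * (M / 2 * ‖s‖ ^ 2) := by
    have hmean : a • (z + b • s) + b • (z - a • s) = (a + b) • z := by module
    have hdiff : z + b • s - (z - a • s) = (a + b) • s := by module
    have := hUM.2 (mem_univ (z + b • s)) (mem_univ (z - a • s)) ha hb hab
    rw [hmean, hdiff, hab, one_smul, one_smul] at this
    simp only [smul_eq_mul] at this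
    linarith
  have hgain : ⟪x₁ - x₂, s⟫ - M / 2 * ‖s‖ ^ 2 = M⁻¹ / 2 * ‖x₁ - x₂‖ ^ 2 := by
    rw [hs, real_inner_smul_right, real_inner_self_eq_norm_sq, norm_smul, mul_pow, norm_inv,
      Real.norm_of_nonneg hM.le]
    field
  have := h.add_mul_inner_sub_le hε hU ha hb hab hsmooth x₁ x₂
  rw [hgain] at this
  simp only [smul_eq_mul]
  linarith

end IsEntropicLegendre

end EntropicLegendre

section LaplaceTransform

variable {E : Type*} [NormedAddCommGroup E] [InnerProductSpace ℝ E]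

-- The values of the convex function `p ↦ exp ⟪p, y⟫` near `x` are controlled by those at the
-- vertices of a simplex surrounding `x`, uniformly in `y`.
theorem exists_forall_norm_mul_exp_inner_le [FiniteDimensional ℝ E] (x : E) :
    ∃ δ > 0, ∃ s : Finset E, ∀ z ∈ Metric.ball x δ, ∀ y,
      ‖y‖ * exp ⟪z, y⟫ ≤ δ⁻¹ * ∑ p ∈ s, exp ⟪p, y⟫ := by
  classical
  obtain ⟨b, hx, -⟩ := exists_mem_interior_convexHull_affineBasis (univ_mem : univ ∈ 𝓝 x)
  obtain ⟨r, hr, hball⟩ := Metric.mem_nhds_iff.1 (mem_interior_iff_mem_nhds.1 hx)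
  refine ⟨r / 2, half_pos hr, Finset.univ.image b, fun z hz y ↦ ?_⟩
  rw [← div_eq_inv_mul, le_div_iff₀ (half_pos hr)]
  set w : E := z + (r / 2 * ‖y‖⁻¹) • y
  have hw : w ∈ convexHull ℝ (range b) := by
    refine hball ?_
    have hshift : ‖(r / 2 * ‖y‖⁻¹) • y‖ ≤ r / 2 := by
      rw [norm_smul, norm_mul, norm_inv, norm_norm, Real.norm_of_nonneg (half_pos hr).le, mul_assoc]
      exact mul_le_of_le_one_right (half_pos hr).le (inv_mul_le_one)
    rw [mem_ball_iff_norm] at hz ⊢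
    calc ‖w - x‖ = ‖(z - x) + (r / 2 * ‖y‖⁻¹) • y‖ := by simp only [w]; congr 1; abel
      _ < r := by linarith [norm_add_le (z - x) ((r / 2 * ‖y‖⁻¹) • y)]
  have hinner : ⟪w, y⟫ = ⟪z, y⟫ + r / 2 * ‖y‖ := by
    rcases eq_or_ne y 0 with rfl | hy
    · simp
    · have : ‖y‖ ≠ 0 := norm_ne_zero_iff.2 hy
      rw [inner_add_left, real_inner_smul_left, real_inner_self_eq_norm_sq]
      field
  have hconv : ConvexOn ℝ univ fun p : E ↦ exp ⟪p, y⟫ :=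
    convexOn_exp.comp_linearMap ((innerₗ E).flip y)
  obtain ⟨_, ⟨i, rfl⟩, hi⟩ := hconv.exists_ge_of_mem_convexHull (subset_univ _) hw
  calc ‖y‖ * exp ⟪z, y⟫ * (r / 2) = exp ⟪z, y⟫ * (r / 2 * ‖y‖) := by ring
    _ ≤ exp ⟪z, y⟫ * exp (r / 2 * ‖y‖) := by
        gcongr
        linarith [add_one_le_exp (r / 2 * ‖y‖)]
    _ = exp ⟪w, y⟫ := by rw [hinner, exp_add]
    _ ≤ exp ⟪b i, y⟫ := hi
    _ ≤ ∑ p ∈ Finset.univ.image b, exp ⟪p, y⟫ :=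
        Finset.single_le_sum (f := fun p ↦ exp ⟪p, y⟫) (fun _ _ ↦ (exp_pos _).le)
          (Finset.mem_image_of_mem b (Finset.mem_univ i))

variable [MeasurableSpace E] {G : Type*} [NormedAddCommGroup G] [NormedSpace ℝ G]

/-- The two-sided Laplace transform of a vector-valued function `k` with respect to `m`. -/
noncomputable def laplaceTransform (m : Measure E) (k : E → G) (x : E) : G :=
  ∫ y, exp ⟪x, y⟫ • k y ∂m

/-- All exponential moments of `k` with respect to `m` are finite, so that its Laplace transform is
given by convergent integrals on the whole space. -/
def HasExpMoments (m : Measure E) (k : E → G) : Prop :=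
  ∀ x, Integrable (fun y ↦ exp ⟪x, y⟫ • k y) m

namespace HasExpMoments

variable {m : Measure E} {k : E → G}

theorem aestronglyMeasurable (hk : HasExpMoments m k) : AEStronglyMeasurable k m := by
  simpa using (hk 0).aestronglyMeasurable

variable [FiniteDimensional ℝ E]

theorem exists_integrable_bound (hk : HasExpMoments m k) (x : E) :
    ∃ δ > 0, ∃ bound : E → ℝ, Integrable bound m ∧ ∀ z ∈ Metric.ball x δ, ∀ y,
      ‖exp ⟪z, y⟫ • (innerSL ℝ y).smulRight (k y)‖ ≤ bound y := by
  obtain ⟨δ, hδ, s, hs⟩ := exists_forall_norm_mul_exp_inner_le x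
  refine ⟨δ, hδ, fun y ↦ δ⁻¹ * ∑ p ∈ s, ‖exp ⟪p, y⟫ • k y‖,
    (integrable_finsetSum _ fun p _ ↦ (hk p).norm).const_mul _, fun z hz y ↦ ?_⟩
  calc ‖exp ⟪z, y⟫ • (innerSL ℝ y).smulRight (k y)‖ = ‖y‖ * exp ⟪z, y⟫ * ‖k y‖ := by
        rw [norm_smul, ContinuousLinearMap.norm_smulRight_apply, innerSL_apply_norm,
          Real.norm_of_nonneg (exp_pos _).le]
        ring
    _ ≤ (δ⁻¹ * ∑ p ∈ s, exp ⟪p, y⟫) * ‖k y‖ :=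
        mul_le_mul_of_nonneg_right (hs z hz y) (norm_nonneg _)
    _ = δ⁻¹ * ∑ p ∈ s, ‖exp ⟪p, y⟫ • k y‖ := by
        simp only [norm_smul, Real.norm_of_nonneg (exp_pos _).le, mul_assoc, Finset.sum_mul]

variable [BorelSpace E]

theorem aestronglyMeasurable_exp_smul_smulRight (hk : HasExpMoments m k) (x : E) :
    AEStronglyMeasurable (fun y ↦ exp ⟪x, y⟫ • (innerSL ℝ y).smulRight (k y)) m := by
  have hexp : Continuous fun y : E ↦ exp ⟪x, y⟫ := by fun_prop
  have hsmul : Continuous fun p : (E →L[ℝ] ℝ) × G ↦ p.1.smulRight p.2 := by fun_prop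
  exact hexp.aestronglyMeasurable.smul <| hsmul.comp_aestronglyMeasurable <|
    (innerSL ℝ).continuous.aestronglyMeasurable.prodMk hk.aestronglyMeasurable

theorem smulRight (hk : HasExpMoments m k) :
    HasExpMoments m fun y ↦ (innerSL ℝ y).smulRight (k y) := by
  intro x
  obtain ⟨δ, hδ, bound, hbound, hle⟩ := hk.exists_integrable_bound x
  exact hbound.mono' (hk.aestronglyMeasurable_exp_smul_smulRight x)
    (.of_forall (hle x (Metric.mem_ball_self hδ)))

theorem hasFDerivAt_laplaceTransform (hk : HasExpMoments m k) (x : E) :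
    HasFDerivAt (laplaceTransform m k)
      (laplaceTransform m (fun y ↦ (innerSL ℝ y).smulRight (k y)) x) x := by
  obtain ⟨δ, hδ, bound, hbound, hle⟩ := hk.exists_integrable_bound x
  refine hasFDerivAt_integral_of_dominated_of_fderiv_le (Metric.ball_mem_nhds x hδ)
    (.of_forall fun z ↦ (hk z).aestronglyMeasurable) (hk x)
    (hk.aestronglyMeasurable_exp_smul_smulRight x)
    (.of_forall fun y z hz ↦ hle z hz y) hbound (.of_forall fun y z _ ↦ ?_)
  have hexp : HasFDerivAt (fun z : E ↦ exp ⟪z, y⟫) (exp ⟪z, y⟫ • innerSL ℝ y) z := by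
    simpa [real_inner_comm] using (innerSL ℝ y).hasFDerivAt.exp (x := z)
  convert! hexp.smul_const (k y) using 1
  ext v
  simp [mul_smul]

theorem contDiff_one_laplaceTransform (hk : HasExpMoments m k) :
    ContDiff ℝ 1 (laplaceTransform m k) :=
  contDiff_one_iff_hasFDerivAt.2 ⟨_, continuous_iff_continuousAt.2 fun x ↦
    (hk.smulRight.hasFDerivAt_laplaceTransform x).continuousAt, hk.hasFDerivAt_laplaceTransform⟩

theorem contDiff_two_laplaceTransform (hk : HasExpMoments m k) :
    ContDiff ℝ 2 (laplaceTransform m k) :=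
  (contDiff_succ_iff_hasFDerivAt (n := 1)).2
    ⟨_, hk.smulRight.contDiff_one_laplaceTransform, hk.hasFDerivAt_laplaceTransform⟩

end HasExpMoments

namespace IsEntropicLegendre

variable [FiniteDimensional ℝ E] [BorelSpace E] {m : Measure E} {ε : ℝ} {U Λ : E → ℝ}

theorem contDiff_two (hε : ε ≠ 0) (hU : Measurable U) (h : IsEntropicLegendre m ε U Λ) :
    ContDiff ℝ 2 Λ := by
  have hfactor (x y : E) :
      exp ⟪ε⁻¹ • x, y⟫ • exp (-U y / ε) = exp ((⟪x, y⟫ - U y) / ε) := by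
    rw [smul_eq_mul, ← exp_add, real_inner_smul_left]
    ring_nf
  have hk : HasExpMoments m fun y ↦ exp (-U y / ε) := by
    intro x
    have hx := hfactor (ε • x)
    simp only [inv_smul_smul₀ hε] at hx
    simp only [hx]
    refine ⟨by fun_prop, ?_⟩
    rw [hasFiniteIntegral_iff_ofReal (.of_forall fun y ↦ (exp_pos _).le)]
    exact (h (ε • x)).trans_lt ENNReal.ofReal_lt_top
  have hlaplace (x : E) :
      laplaceTransform m (fun y ↦ exp (-U y / ε)) (ε⁻¹ • x) = exp (Λ x / ε) := by
    simp only [laplaceTransform, hfactor]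
    rw [integral_eq_lintegral_of_nonneg_ae (.of_forall fun y ↦ (exp_pos _).le) (by fun_prop)]
    exact (congrArg ENNReal.toReal (h x)).trans (ENNReal.toReal_ofReal (exp_pos _).le)
  have hlog : Λ = fun x ↦ ε * log (laplaceTransform m (fun y ↦ exp (-U y / ε)) (ε⁻¹ • x)) := by
    ext x
    rw [hlaplace, log_exp, mul_div_cancel₀ _ hε]
  rw [hlog]
  refine contDiff_const.mul (ContDiff.log (hk.contDiff_two_laplaceTransform.comp
    (contDiff_const_smul ε⁻¹)) fun x ↦ ?_)
  exact (hlaplace x).symm ▸ (exp_pos _).ne'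

end IsEntropicLegendre

end LaplaceTransform

section Hessian

theorem convexOn_univ_iff_forall_line {E : Type*} [AddCommGroup E] [Module ℝ E] {φ : E → ℝ} :
    ConvexOn ℝ univ φ ↔ ∀ x v, ConvexOn ℝ univ fun t : ℝ ↦ φ (x + t • v) := by
  refine ⟨fun h x v ↦ ⟨convex_univ, fun s _ t _ a b ha hb hab ↦ ?_⟩,
    fun h ↦ ⟨convex_univ, fun x _ y _ a b ha hb hab ↦ ?_⟩⟩
  · convert h.2 (mem_univ (x + s • v)) (mem_univ (x + t • v)) ha hb hab using 2
    obtain rfl : a = 1 - b := by linarith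
    simp only [smul_eq_mul]
    module
  · convert (h x (y - x)).2 (mem_univ 0) (mem_univ 1) ha hb hab using 2
    · obtain rfl : a = 1 - b := by linarith
      simp only [smul_eq_mul]
      module
    · simp
    · simp

theorem convexOn_univ_iff_of_hasDerivAt {q q' q'' : ℝ → ℝ} (hq : ∀ t, HasDerivAt q (q' t) t)
    (hq' : ∀ t, HasDerivAt q' (q'' t) t) : ConvexOn ℝ univ q ↔ ∀ t, 0 ≤ q'' t := by
  have hderiv : deriv q = q' := funext fun t ↦ (hq t).deriv
  refine ⟨fun h t ↦ (hq' t).nonneg_of_monotone ?_, fun h ↦ ?_⟩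
  · rw [← hderiv, ← monotoneOn_univ]
    exact h.monotoneOn_deriv fun t _ ↦ (hq t).differentiableAt
  · refine Monotone.convexOn_univ_of_deriv (fun t ↦ (hq t).differentiableAt) ?_
    rw [hderiv]
    exact monotone_of_deriv_nonneg (fun t ↦ (hq' t).differentiableAt)
      fun t ↦ (hq' t).deriv ▸ h t

variable {E : Type*} [NormedAddCommGroup E] [InnerProductSpace ℝ E]

theorem continuous_of_strongConvexOn [FiniteDimensional ℝ E] {φ : E → ℝ} {m : ℝ}
    (h : StrongConvexOn univ m φ) : Continuous φ := by
  have := (strongConvexOn_iff_convex.1 h).locallyLipschitz.continuous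
  exact (this.add ((continuous_norm.pow 2).const_mul (m / 2))).congr fun x ↦ sub_add_cancel _ _

theorem continuous_of_strongConcaveOn [FiniteDimensional ℝ E] {φ : E → ℝ} {m : ℝ}
    (h : StrongConcaveOn univ m φ) : Continuous φ := by
  simpa using (continuous_of_strongConvexOn (UniformConcaveOn.neg h)).neg

theorem hasDerivAt_line (x v : E) (t : ℝ) : HasDerivAt (fun s : ℝ ↦ x + s • v) v t := by
  simpa using ((hasDerivAt_id t).smul_const v).const_add x

variable [CompleteSpace E] {φ : E → ℝ}

theorem gradient_fun_neg (φ : E → ℝ) : ∇ (fun x ↦ -φ x) = fun x ↦ -∇ φ x := by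
  ext x
  simp [gradient]

theorem differentiable_gradient_of_contDiff_two (h : ContDiff ℝ 2 φ) : Differentiable ℝ (∇ φ) :=
  (InnerProductSpace.toDual ℝ E).symm.differentiable.comp
    ((h.fderiv_right (m := 1) (by norm_num)).differentiable (by norm_num))

theorem hasDerivAt_comp_line (hφ : Differentiable ℝ φ) (x v : E) (t : ℝ) :
    HasDerivAt (fun s : ℝ ↦ φ (x + s • v)) ⟪∇ φ (x + t • v), v⟫ t :=
  (hφ (x + t • v)).hasGradientAt.hasFDerivAt.comp_hasDerivAt (f := fun s : ℝ ↦ x + s • v) t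
    (hasDerivAt_line x v t)

theorem hasDerivAt_inner_gradient_line (hφ' : Differentiable ℝ (∇ φ)) (x v : E) (t : ℝ) :
    HasDerivAt (fun s : ℝ ↦ ⟪∇ φ (x + s • v), v⟫)
      ⟪fderiv ℝ (∇ φ) (x + t • v) v, v⟫ t := by
  simpa using ((hφ' (x + t • v)).hasFDerivAt.comp_hasDerivAt t (hasDerivAt_line x v t)).inner ℝ
    (hasDerivAt_const t v)

theorem strongConvexOn_univ_iff_le_inner_fderiv_gradient (hφ : Differentiable ℝ φ)
    (hφ' : Differentiable ℝ (∇ φ)) {m : ℝ} :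
    StrongConvexOn univ m φ ↔ ∀ x v, m * ‖v‖ ^ 2 ≤ ⟪fderiv ℝ (∇ φ) x v, v⟫ := by
  have hconv (x v : E) : (ConvexOn ℝ univ fun t : ℝ ↦ φ (x + t • v) - m / 2 * ‖x + t • v‖ ^ 2) ↔
      ∀ t : ℝ, 0 ≤ ⟪fderiv ℝ (∇ φ) (x + t • v) v, v⟫ - m * ‖v‖ ^ 2 := by
    refine convexOn_univ_iff_of_hasDerivAt
      (q' := fun t ↦ ⟪∇ φ (x + t • v), v⟫ - m * ⟪x + t • v, v⟫) (fun t ↦ ?_) fun t ↦ ?_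
    · convert! (hasDerivAt_comp_line hφ x v t).sub
        ((hasDerivAt_line x v t).norm_sq.const_mul (m / 2)) using 1
      ring
    · convert! (hasDerivAt_inner_gradient_line hφ' x v t).sub
        (((hasDerivAt_line x v t).inner ℝ (hasDerivAt_const t v)).const_mul m) using 1
      simp
  rw [strongConvexOn_iff_convex, convexOn_univ_iff_forall_line]
  refine (forall₂_congr hconv).trans ⟨fun h x v ↦ ?_, fun h x v t ↦ sub_nonneg.2 (h _ v)⟩
  simpa using h x v 0

theorem convexOn_univ_iff_inner_fderiv_gradient_nonneg (hφ : Differentiable ℝ φ)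
    (hφ' : Differentiable ℝ (∇ φ)) :
    ConvexOn ℝ univ φ ↔ ∀ x v, 0 ≤ ⟪fderiv ℝ (∇ φ) x v, v⟫ := by
  simpa using strongConvexOn_univ_iff_le_inner_fderiv_gradient hφ hφ' (m := 0)

theorem strongConcaveOn_univ_iff_inner_fderiv_gradient_le (hφ : Differentiable ℝ φ)
    (hφ' : Differentiable ℝ (∇ φ)) {m : ℝ} :
    StrongConcaveOn univ (-m) φ ↔ ∀ x v, ⟪fderiv ℝ (∇ φ) x v, v⟫ ≤ m * ‖v‖ ^ 2 := by
  have hneg : StrongConcaveOn univ (-m) φ ↔ StrongConvexOn univ (-m) fun x ↦ -φ x :=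
    ⟨UniformConcaveOn.neg, fun h ↦ neg_neg φ ▸ UniformConvexOn.neg h⟩
  have hgrad : Differentiable ℝ (∇ fun x ↦ -φ x) := gradient_fun_neg φ ▸ hφ'.fun_neg
  rw [hneg, strongConvexOn_univ_iff_le_inner_fderiv_gradient hφ.fun_neg hgrad, gradient_fun_neg]
  simp [fderiv_fun_neg]

theorem isSymmetric_fderiv_gradient (hφ : Differentiable ℝ φ) (hφ' : Differentiable ℝ (∇ φ))
    (x : E) : (fderiv ℝ (∇ φ) x).IsSymmetric := by
  intro v w
  have hdual : HasFDerivAt (fun z ↦ InnerProductSpace.toDual ℝ E (∇ φ z))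
      (innerSL ℝ ∘L fderiv ℝ (∇ φ) x) x := (innerSL ℝ).hasFDerivAt.comp x (hφ' x).hasFDerivAt
  have := second_derivative_symmetric (fun z ↦ (hφ z).hasGradientAt.hasFDerivAt) hdual v w
  exact this.trans (real_inner_comm _ _)

theorem norm_fderiv_gradient_le (hφ : Differentiable ℝ φ) (hφ' : Differentiable ℝ (∇ φ)) {x : E}
    {L : ℝ} (hL : 0 ≤ L) (h : ∀ v, |⟪fderiv ℝ (∇ φ) x v, v⟫| ≤ L * ‖v‖ ^ 2) :
    ‖fderiv ℝ (∇ φ) x‖ ≤ L := by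
  rw [ContinuousLinearMap.norm_eq_iSup_rayleighQuotient _ (isSymmetric_fderiv_gradient hφ hφ' x)]
  refine Real.iSup_le (fun v ↦ ?_) hL
  rcases eq_or_ne v 0 with rfl | hv
  · simpa using hL
  · rw [abs_div, abs_sq, div_le_iff₀ (by positivity)]
    exact h v

theorem lipschitzWith_gradient (hφ : Differentiable ℝ φ) (hφ' : Differentiable ℝ (∇ φ)) {L : ℝ}
    (hL : 0 ≤ L) (h : ∀ x v, |⟪fderiv ℝ (∇ φ) x v, v⟫| ≤ L * ‖v‖ ^ 2) :
    LipschitzWith L.toNNReal (∇ φ) :=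
  lipschitzWith_of_nnnorm_fderiv_le hφ' fun x ↦
    (Real.le_toNNReal_iff_coe_le hL).2 (norm_fderiv_gradient_le hφ hφ' hL (h x))

end Hessian

section FixedPoint

theorem exists_mem_le_of_mapsTo {S : Set ℝ} (hS : IsClosed S) (hS₀ : S.Nonempty)
    (hS_bdd : BddBelow S) {T : ℝ → ℝ} (hT : MapsTo T S S) : ∃ L ∈ S, L ≤ T L :=
  ⟨sInf S, hS.csInf_mem hS₀ hS_bdd, csInf_le hS_bdd (hT (hS.csInf_mem hS₀ hS_bdd))⟩

/-- The upper bound `(√(4α/β + ε²α²) - εα) / 2` for the Hessian of the entropic potential. For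
positive parameters, it is the nonnegative root of `L² + εαL = α/β`. -/
noncomputable def entropicHessianBound (α β ε : ℝ) : ℝ :=
  (1 / 2) * (√(4 * α / β + ε ^ 2 * α ^ 2) - ε * α)

variable {α β ε : ℝ}

theorem entropicHessianBound_nonneg (hα : 0 ≤ α) (hβ : 0 ≤ β) :
    0 ≤ entropicHessianBound α β ε := by
  have : ε * α ≤ √(4 * α / β + ε ^ 2 * α ^ 2) := by
    refine Real.le_sqrt_of_sq_le ?_
    have : 0 ≤ 4 * α / β := by positivity
    linarith [mul_pow ε α 2]
  unfold entropicHessianBound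
  linarith

theorem entropicHessianBound_le_sqrt (hα : 0 ≤ α) (hβ : 0 ≤ β) (hε : 0 ≤ ε) :
    entropicHessianBound α β ε ≤ √(α / β) := by
  have : √(4 * α / β + ε ^ 2 * α ^ 2) ≤ 2 * √(α / β) + ε * α := by
    rw [Real.sqrt_le_left (by positivity), mul_div_assoc]
    have hsq := Real.sq_sqrt (div_nonneg hα hβ)
    have hcross : 0 ≤ √(α / β) * (ε * α) := by positivity
    linarith [add_sq (2 * √(α / β)) (ε * α), mul_pow ε α 2, mul_pow 2 √(α / β) 2]
  unfold entropicHessianBound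
  linarith

theorem le_entropicHessianBound {L : ℝ} (h : L ^ 2 + ε * α * L ≤ α / β) :
    L ≤ entropicHessianBound α β ε := by
  have : 2 * L + ε * α ≤ √(4 * α / β + ε ^ 2 * α ^ 2) := by
    refine Real.le_sqrt_of_sq_le ?_
    rw [mul_div_assoc]
    linarith [add_sq (2 * L) (ε * α), mul_pow ε α 2, mul_pow 2 L 2]
  unfold entropicHessianBound
  linarith

theorem sq_add_mul_le_div_of_le_inv {L : ℝ} (hα : 0 < α) (hβ : 0 < β) (hε : 0 < ε) (hL : 0 ≤ L)
    (h : L ≤ ((L + ε * α)⁻¹ + ε * β)⁻¹) : L ^ 2 + ε * α * L ≤ α / β := by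
  have hmul : L * ((L + ε * α)⁻¹ + ε * β) ≤ 1 :=
    (mul_le_mul_of_nonneg_right h (by positivity)).trans inv_mul_le_one
  rw [le_div_iff₀ hβ]
  refine le_of_mul_le_mul_left ?_ hε
  calc ε * ((L ^ 2 + ε * α * L) * β)
      = L * ((L + ε * α)⁻¹ + ε * β) * (L + ε * α) - L := by field
    _ ≤ 1 * (L + ε * α) - L := by gcongr
    _ = ε * α := by ring

end FixedPoint

section StrongConvexity

variable {E : Type*} [NormedAddCommGroup E] [InnerProductSpace ℝ E] {s : Set E} {φ ψ : E → ℝ}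

theorem isClosed_setOf_strongConcaveOn (s : Set E) (φ : E → ℝ) :
    IsClosed {m | StrongConcaveOn s m φ} := by
  simp only [StrongConcaveOn, UniformConcaveOn, ofPred_and, ofPred_forall]
  refine isClosed_const.inter ?_
  repeat refine isClosed_iInter fun _ ↦ ?_
  exact isClosed_le (by fun_prop) continuous_const

theorem strongConvexOn_add_smul {c κ ε : ℝ} (hφ : StrongConvexOn s c φ)
    (hψ : StrongConvexOn s κ ψ) (hε : 0 ≤ ε) : StrongConvexOn s (c + ε * κ) (φ + ε • ψ) := by
  rw [strongConvexOn_iff_convex] at *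
  convert! hφ.add (hψ.smul hε) using 1
  funext x
  simp only [Pi.add_apply, Pi.smul_apply, smul_eq_mul]
  ring

theorem strongConcaveOn_add_smul {c κ ε : ℝ} (hφ : StrongConcaveOn s c φ)
    (hψ : StrongConcaveOn s κ ψ) (hε : 0 ≤ ε) : StrongConcaveOn s (c + ε * κ) (φ + ε • ψ) := by
  rw [strongConcaveOn_iff_convex] at *
  convert! hφ.add (hψ.smul hε) using 1
  funext x
  simp only [Pi.add_apply, Pi.smul_apply, smul_eq_mul]
  ring

end StrongConvexity

section EntropicHessian

namespace IsEntropicLegendre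

variable {E : Type*} [NormedAddCommGroup E] [InnerProductSpace ℝ E] [FiniteDimensional ℝ E]
  [MeasurableSpace E] [BorelSpace E] {m : Measure E} [m.IsAddHaarMeasure] {ε : ℝ} {φ ψ : E → ℝ}

theorem strongConcaveOn_of_gibbsMeasure {W : E → ℝ} {c β : ℝ} (hε : 0 < ε) (hψ : Measurable ψ)
    (h : IsEntropicLegendre (gibbsMeasure m W) ε ψ φ) (hW : StrongConvexOn univ β W)
    (hψc : StrongConvexOn univ c ψ) (hc : 0 < c + ε * β) :
    StrongConcaveOn univ (-(c + ε * β)⁻¹) φ := by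
  have hWm : Measurable W := (continuous_of_strongConvexOn hW).measurable
  exact (h.of_gibbsMeasure hε.ne' hWm hψ).strongConcaveOn
    (isPrekopaLeindler_of_isAddHaarMeasure m) hε (by fun_prop) hc
    (strongConvexOn_add_smul hψc hW hε.le)

theorem strongConvexOn_of_gibbsMeasure {V : E → ℝ} {L α : ℝ} (hε : 0 < ε) (hφ : Measurable φ)
    (h : IsEntropicLegendre (gibbsMeasure m V) ε φ ψ) (hV : StrongConcaveOn univ (-α) V)
    (hφL : StrongConcaveOn univ (-L) φ) (hL : 0 < L + ε * α) :
    StrongConvexOn univ (L + ε * α)⁻¹ ψ := by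
  have hVm : Measurable V := (continuous_of_strongConcaveOn hV).measurable
  refine (h.of_gibbsMeasure hε.ne' hVm hφ).strongConvexOn hε (by fun_prop) hL ?_
  convert strongConcaveOn_add_smul hφL hV hε.le using 1
  ring

theorem strongConcaveOn_entropicHessianBound {V W : E → ℝ} {α β : ℝ} (hα : 0 < α) (hβ : 0 < β)
    (hε : 0 < ε) (hV : StrongConcaveOn univ (-α) V) (hW : StrongConvexOn univ β W)
    (hφ : Measurable φ) (hψ : Measurable ψ) (hφψ : IsEntropicLegendre (gibbsMeasure m W) ε ψ φ)
    (hψφ : IsEntropicLegendre (gibbsMeasure m V) ε φ ψ) :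
    StrongConcaveOn univ (-entropicHessianBound α β ε) φ := by
  set S : Set ℝ := {L | 0 ≤ L ∧ StrongConcaveOn univ (-L) φ}
  have hS : IsClosed S :=
    isClosed_Ici.inter ((isClosed_setOf_strongConcaveOn univ φ).preimage continuous_neg)
  have hS₀ : S.Nonempty :=
    ⟨(0 + ε * β)⁻¹, by positivity, hφψ.strongConcaveOn_of_gibbsMeasure hε hψ hW
      (strongConvexOn_zero.2 (hψφ.convexOn hε hφ)) (by positivity)⟩
  have hT : MapsTo (fun L ↦ ((L + ε * α)⁻¹ + ε * β)⁻¹) S S := by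
    rintro L ⟨hL, hφL⟩
    exact ⟨by positivity, hφψ.strongConcaveOn_of_gibbsMeasure hε hψ hW
      (hψφ.strongConvexOn_of_gibbsMeasure hε hφ hV hφL (by positivity)) (by positivity)⟩
  obtain ⟨L, ⟨hL, hφL⟩, hle⟩ := exists_mem_le_of_mapsTo hS hS₀ ⟨0, fun L hL ↦ hL.1⟩ hT
  refine hφL.mono (neg_le_neg ?_)
  exact le_entropicHessianBound (sq_add_mul_le_div_of_le_inv hα hβ hε hL hle)

end IsEntropicLegendre

namespace IsSchrodingerPair

variable {d : ℕ} {μ ν : Measure (EuclideanSpace ℝ (Fin d))} {ε : ℝ}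
  {f g : EuclideanSpace ℝ (Fin d) → ℝ}

theorem symm (h : IsSchrodingerPair μ ν ε f g) : IsSchrodingerPair ν μ ε g f :=
  ⟨h.2.1, h.1, h.2.2.2, h.2.2.1⟩

theorem measurable_entPot (h : IsSchrodingerPair μ ν ε f g) : Measurable (entPot f) := by
  have := h.1
  unfold entPot
  fun_prop

theorem isEntropicLegendre (hε : ε ≠ 0) (h : IsSchrodingerPair μ ν ε f g) :
    IsEntropicLegendre ν ε (entPot g) (entPot f) := by
  intro x
  obtain ⟨hint, hpos, hf⟩ := h.2.2.1 x
  have hfactor (y : EuclideanSpace ℝ (Fin d)) :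
      (⟪x, y⟫ - entPot g y) / ε = ‖x‖ ^ 2 / 2 / ε + (g y - ‖x - y‖ ^ 2 / 2) / ε := by
    rw [entPot, norm_sub_sq_real]
    ring
  have hvalue : entPot f x / ε =
      ‖x‖ ^ 2 / 2 / ε + log (∫ y, exp ((g y - ‖x - y‖ ^ 2 / 2) / ε) ∂ν) := by
    rw [entPot, hf]
    field
  simp only [boltzmann, hfactor, hvalue, exp_add, exp_log hpos]
  rw [ENNReal.ofReal_mul (exp_pos _).le, ofReal_integral_eq_lintegral_ofReal hint
    (.of_forall fun _ ↦ (exp_pos _).le), ← lintegral_const_mul' _ _ ENNReal.ofReal_ne_top]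
  exact lintegral_congr fun y ↦ ENNReal.ofReal_mul (exp_pos _).le

end IsSchrodingerPair

theorem entropic_hessian_bounds_general {d : ℕ} (V W : EuclideanSpace ℝ (Fin d) → ℝ) (α β : ℝ)
    (hα : 0 < α) (hβ : 0 < β) (hV : StrongConcaveOn univ (-α) V) (hW : StrongConvexOn univ β W)
    (ε : ℝ) (hε : 0 < ε) (f g : EuclideanSpace ℝ (Fin d) → ℝ)
    (hfg : IsSchrodingerPair (gibbsMeasure volume V) (gibbsMeasure volume W) ε f g) :
    Differentiable ℝ (entPot f) ∧
    Differentiable ℝ (∇ (entPot f)) ∧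
    (∀ x v, 0 ≤ ⟪fderiv ℝ (∇ (entPot f)) x v, v⟫ ∧
      ⟪fderiv ℝ (∇ (entPot f)) x v, v⟫ ≤ entropicHessianBound α β ε * ‖v‖ ^ 2) ∧
    LipschitzWith (entropicHessianBound α β ε).toNNReal (∇ (entPot f)) ∧
    LipschitzWith (√(α / β)).toNNReal (∇ (entPot f)) := by
  have hφ := hfg.measurable_entPot
  have hψ := hfg.symm.measurable_entPot
  have hφψ := hfg.isEntropicLegendre hε.ne'
  have hψφ := hfg.symm.isEntropicLegendre hε.ne'
  have hC2 : ContDiff ℝ 2 (entPot f) := hφψ.contDiff_two hε.ne' hψ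
  have hd : Differentiable ℝ (entPot f) := hC2.differentiable (by norm_num)
  have hd' : Differentiable ℝ (∇ (entPot f)) := differentiable_gradient_of_contDiff_two hC2
  have hconvex := (convexOn_univ_iff_inner_fderiv_gradient_nonneg hd hd').1
    (hφψ.convexOn hε hψ)
  have hconcave := (strongConcaveOn_univ_iff_inner_fderiv_gradient_le hd hd').1
    (hφψ.strongConcaveOn_entropicHessianBound hα hβ hε hV hW hφ hψ hψφ)
  have hlip := lipschitzWith_gradient hd hd' (entropicHessianBound_nonneg hα.le hβ.le)
    fun x v ↦ (abs_of_nonneg (hconvex x v)).trans_le (hconcave x v)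
  exact ⟨hd, hd', fun x v ↦ ⟨hconvex x v, hconcave x v⟩, hlip,
    hlip.weaken (Real.toNNReal_mono (entropicHessianBound_le_sqrt hα.le hβ.le hε.le))⟩

end EntropicHessian

/-- Chewi–Pooladian bounds: under (A1), for every `ε > 0` the entropic
potential `φ_ε` is twice differentiable, its gradient is globally Lipschitz, and its
Hessian satisfies `0 ≼ ∇²φ_ε(x) ≼ (1/2)(√(4α/β + ε²α²) − εα) I`; in particular `∇φ_ε` is
`√(α/β)`-Lipschitz uniformly in `ε`. -/
theorem entropic_hessian_bounds {d : ℕ}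
    (μ ν : Measure (EuclideanSpace ℝ (Fin d)))
    (V W : EuclideanSpace ℝ (Fin d) → ℝ) (α β : ℝ)
    (hA1 : AssumptionA1 μ ν V W α β)
    (ε : ℝ) (hε : 0 < ε)
    (f g : EuclideanSpace ℝ (Fin d) → ℝ)
    (hfg : IsSchrodingerPair μ ν ε f g) :
    Differentiable ℝ (entPot f) ∧
    Differentiable ℝ (fun x => gradient (entPot f) x) ∧
    (∀ x v, 0 ≤ ⟪fderiv ℝ (fun z => gradient (entPot f) z) x v, v⟫ ∧
      ⟪fderiv ℝ (fun z => gradient (entPot f) z) x v, v⟫ ≤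
        (1 / 2) * (Real.sqrt (4 * α / β + ε ^ 2 * α ^ 2) - ε * α) * ‖v‖ ^ 2) ∧
    LipschitzWith (Real.toNNReal ((1 / 2) * (Real.sqrt (4 * α / β + ε ^ 2 * α ^ 2) - ε * α)))
      (fun x => gradient (entPot f) x) ∧
    LipschitzWith (Real.toNNReal (Real.sqrt (α / β))) (fun x => gradient (entPot f) x) := by
  obtain ⟨-, -, rfl, rfl, hV, hW, hα, hβ, hVH, hWH⟩ := hA1
  have hV' := differentiable_gradient_of_contDiff_two (contDiff_infty.1 hV 2)
  have hW' := differentiable_gradient_of_contDiff_two (contDiff_infty.1 hW 2)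
  exact entropic_hessian_bounds_general V W α β hα hβ
    ((strongConcaveOn_univ_iff_inner_fderiv_gradient_le (hV.differentiable (by simp)) hV').2 hVH)
    ((strongConvexOn_univ_iff_le_inner_fderiv_gradient (hW.differentiable (by simp)) hW').2 hWH)
    ε hε f g hfg
end
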